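/- A vector v = (F,G) ∈ V₄ is stable for the action of the group G₄ = SL₂(L)×SL₃(L)×Lˣ if and only if Δ₄(v) ≠ 0 in L. -/

import Mathlib

/- The discriminant of the binary quartic A U⁴ + B U³W + C U²W² + D UW³ + E W⁴. -/
def disc4 {R : Type*} [CommRing R] (A B C D E : R) : R :=
  B ^ 2 * C ^ 2 * D ^ 2 - 4 * B ^ 2 * C ^ 3 * E - 4 * B ^ 3 * D ^ 3 + 18 * B ^ 3 * C * D * E
       - 27 * B ^ 4 * E ^ 2 - 4 * A * C ^ 3 * D ^ 2 + 16 * A * C ^ 4 * E + 18 * A * B * C * D ^ 3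
       - 80 * A * B * C ^ 2 * D * E - 6 * A * B ^ 2 * D ^ 2 * E + 144 * A * B ^ 2 * C * E ^ 2 - 27 * A ^ 2 * D ^ 4
       + 144 * A ^ 2 * C * D ^ 2 * E - 128 * A ^ 2 * C ^ 2 * E ^ 2 - 192 * A ^ 2 * B * D * E ^ 2 + 256 * A ^ 3 * E ^ 3

/- The five coefficients (in U⁴, U³W, U²W², UW³, W⁴) of the binary quartic
(mU + nW)·disc₂(F), where v = (F, mU+nW) ∈ V₄ has coordinates c = (a,…,l,m,n)
(so `c 0, …, c 13` are a,b,c,d,e,f,g,h,i,j,k,l,m,n), F = (aU+bW)X² + (cU+dW)Y² +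
(eU+fW)Z² + (gU+hW)XY + (iU+jW)XZ + (kU+lW)YZ, and disc₂ is the discriminant
4ABC + DEF − AF² − BE² − CD² of F regarded as a quadratic form in (X,Y,Z). -/
def v4QuarticCoeffs {L : Type*} [CommRing L] (c : Fin 14 → L) : Fin 5 → L :=
  ![c 6 * c 8 * c 10 * c 12 - c 4 * c 6 ^ 2 * c 12 - c 2 * c 8 ^ 2 * c 12 - c 0 * c 10 ^ 2 * c 12
       + 4 * c 0 * c 2 * c 4 * c 12,
    c 7 * c 8 * c 10 * c 12 + c 6 * c 9 * c 10 * c 12 + c 6 * c 8 * c 11 * c 12 + c 6 * c 8 * c 10 * c 13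
       - c 5 * c 6 ^ 2 * c 12 - 2 * c 4 * c 6 * c 7 * c 12 - c 4 * c 6 ^ 2 * c 13 - c 3 * c 8 ^ 2 * c 12
       - 2 * c 2 * c 8 * c 9 * c 12 - c 2 * c 8 ^ 2 * c 13 - c 1 * c 10 ^ 2 * c 12 + 4 * c 1 * c 2 * c 4 * c 12
       - 2 * c 0 * c 10 * c 11 * c 12 - c 0 * c 10 ^ 2 * c 13 + 4 * c 0 * c 3 * c 4 * c 12 + 4 * c 0 * c 2 * c 5 * c 12
       + 4 * c 0 * c 2 * c 4 * c 13,
    c 7 * c 9 * c 10 * c 12 + c 7 * c 8 * c 11 * c 12 + c 7 * c 8 * c 10 * c 13 + c 6 * c 9 * c 11 * c 12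
       + c 6 * c 9 * c 10 * c 13 + c 6 * c 8 * c 11 * c 13 - 2 * c 5 * c 6 * c 7 * c 12 - c 5 * c 6 ^ 2 * c 13
       - c 4 * c 7 ^ 2 * c 12 - 2 * c 4 * c 6 * c 7 * c 13 - 2 * c 3 * c 8 * c 9 * c 12 - c 3 * c 8 ^ 2 * c 13
       - c 2 * c 9 ^ 2 * c 12 - 2 * c 2 * c 8 * c 9 * c 13 - 2 * c 1 * c 10 * c 11 * c 12 - c 1 * c 10 ^ 2 * c 13
       + 4 * c 1 * c 3 * c 4 * c 12 + 4 * c 1 * c 2 * c 5 * c 12 + 4 * c 1 * c 2 * c 4 * c 13 - c 0 * c 11 ^ 2 * c 12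
       - 2 * c 0 * c 10 * c 11 * c 13 + 4 * c 0 * c 3 * c 5 * c 12 + 4 * c 0 * c 3 * c 4 * c 13 + 4 * c 0 * c 2 * c 5 * c 13,
    c 7 * c 9 * c 11 * c 12 + c 7 * c 9 * c 10 * c 13 + c 7 * c 8 * c 11 * c 13 + c 6 * c 9 * c 11 * c 13
       - c 5 * c 7 ^ 2 * c 12 - 2 * c 5 * c 6 * c 7 * c 13 - c 4 * c 7 ^ 2 * c 13 - c 3 * c 9 ^ 2 * c 12
       - 2 * c 3 * c 8 * c 9 * c 13 - c 2 * c 9 ^ 2 * c 13 - c 1 * c 11 ^ 2 * c 12 - 2 * c 1 * c 10 * c 11 * c 13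
       + 4 * c 1 * c 3 * c 5 * c 12 + 4 * c 1 * c 3 * c 4 * c 13 + 4 * c 1 * c 2 * c 5 * c 13 - c 0 * c 11 ^ 2 * c 13
       + 4 * c 0 * c 3 * c 5 * c 13,
    c 7 * c 9 * c 11 * c 13 - c 5 * c 7 ^ 2 * c 13 - c 3 * c 9 ^ 2 * c 13 - c 1 * c 11 ^ 2 * c 13
       + 4 * c 1 * c 3 * c 5 * c 13]

/- The invariant Δ₄(v) = disc₄((mU+nW)·disc₂(F)). -/
def Delta4 {L : Type*} [CommRing L] (c : Fin 14 → L) : L :=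
  disc4 (v4QuarticCoeffs c 0) (v4QuarticCoeffs c 1) (v4QuarticCoeffs c 2)
    (v4QuarticCoeffs c 3) (v4QuarticCoeffs c 4)

/- Zariski-closedness of a subset of affine n-space over L: it is the common zero locus
of a set of polynomial functions (with respect to the fixed coordinates). -/
def IsZariskiClosed {n : ℕ} {L : Type*} [CommRing L] (s : Set (Fin n → L)) : Prop :=
  ∃ P : Set (MvPolynomial (Fin n) L), s = {x | ∀ p ∈ P, MvPolynomial.eval x p = 0}

/- The pair (F, G) ∈ V₄ with coordinates c (variables: inl 0,1 = U,W; inr 0,1,2 = X,Y,Z):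
F = (aU+bW)X² + (cU+dW)Y² + (eU+fW)Z² + (gU+hW)XY + (iU+jW)XZ + (kU+lW)YZ, G = mU + nW. -/
noncomputable def toV4 {L : Type*} [CommRing L] (c : Fin 14 → L) :
    MvPolynomial (Fin 2 ⊕ Fin 3) L × MvPolynomial (Fin 2 ⊕ Fin 3) L :=
  ((MvPolynomial.C (c 0) * MvPolynomial.X (Sum.inl 0) + MvPolynomial.C (c 1) * MvPolynomial.X (Sum.inl 1)) * MvPolynomial.X (Sum.inr 0) ^ 2
    + (MvPolynomial.C (c 2) * MvPolynomial.X (Sum.inl 0) + MvPolynomial.C (c 3) * MvPolynomial.X (Sum.inl 1)) * MvPolynomial.X (Sum.inr 1) ^ 2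
    + (MvPolynomial.C (c 4) * MvPolynomial.X (Sum.inl 0) + MvPolynomial.C (c 5) * MvPolynomial.X (Sum.inl 1)) * MvPolynomial.X (Sum.inr 2) ^ 2
    + (MvPolynomial.C (c 6) * MvPolynomial.X (Sum.inl 0) + MvPolynomial.C (c 7) * MvPolynomial.X (Sum.inl 1)) * (MvPolynomial.X (Sum.inr 0) * MvPolynomial.X (Sum.inr 1))
    + (MvPolynomial.C (c 8) * MvPolynomial.X (Sum.inl 0) + MvPolynomial.C (c 9) * MvPolynomial.X (Sum.inl 1)) * (MvPolynomial.X (Sum.inr 0) * MvPolynomial.X (Sum.inr 2))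
    + (MvPolynomial.C (c 10) * MvPolynomial.X (Sum.inl 0) + MvPolynomial.C (c 11) * MvPolynomial.X (Sum.inl 1)) * (MvPolynomial.X (Sum.inr 1) * MvPolynomial.X (Sum.inr 2)),
   MvPolynomial.C (c 12) * MvPolynomial.X (Sum.inl 0) + MvPolynomial.C (c 13) * MvPolynomial.X (Sum.inl 1))

/- Linear substitution of (U,W) by A ∈ SL₂(L) and of (X,Y,Z) by B ∈ SL₃(L). -/
noncomputable def sub4 {L : Type*} [CommRing L]
    (A : Matrix.SpecialLinearGroup (Fin 2) L) (B : Matrix.SpecialLinearGroup (Fin 3) L)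
    (v : MvPolynomial (Fin 2 ⊕ Fin 3) L) : MvPolynomial (Fin 2 ⊕ Fin 3) L :=
  MvPolynomial.aeval
    (Sum.elim (fun i => ∑ j : Fin 2, MvPolynomial.C (A.1 i j) * MvPolynomial.X (Sum.inl j))
              (fun i => ∑ j : Fin 3, MvPolynomial.C (B.1 i j) * MvPolynomial.X (Sum.inr j))) v

/- The action of G₄ = SL₂(L) × SL₃(L) × Lˣ on V₄:
(A, B, t)·(F, G) = (t⁻¹·F′, t³·G′), where F′, G′ are obtained by linear substitution. -/
noncomputable def act4 {L : Type*} [Field L]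
    (g : Matrix.SpecialLinearGroup (Fin 2) L × Matrix.SpecialLinearGroup (Fin 3) L × Lˣ)
    (v : MvPolynomial (Fin 2 ⊕ Fin 3) L × MvPolynomial (Fin 2 ⊕ Fin 3) L) :
    MvPolynomial (Fin 2 ⊕ Fin 3) L × MvPolynomial (Fin 2 ⊕ Fin 3) L :=
  (((g.2.2 : L))⁻¹ • sub4 g.1 g.2.1 v.1, ((g.2.2 : L)) ^ 3 • sub4 g.1 g.2.1 v.2)

/- Stability: the orbit of v (in the coordinate space of V₄ with respect to its monomial
basis) is Zariski-closed and the stabilizer of v in G₄ is finite. -/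
def Stable4 {L : Type*} [Field L] (c : Fin 14 → L) : Prop :=
  IsZariskiClosed {c' : Fin 14 → L |
    ∃ g : Matrix.SpecialLinearGroup (Fin 2) L × Matrix.SpecialLinearGroup (Fin 3) L × Lˣ,
      toV4 c' = act4 g (toV4 c)} ∧
  {g : Matrix.SpecialLinearGroup (Fin 2) L × Matrix.SpecialLinearGroup (Fin 3) L × Lˣ |
      act4 g (toV4 c) = toV4 c}.Finite

/-!
Write `k = disc₂(F)`, a binary cubic form, so that `Δ₄ = disc(k) · Res(G, k)²`. If `Δ₄ = 0`, then
some zero of `k` is double or is also a zero of `G`. The corresponding member of the pencil `F` is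
a pair of lines; putting a suitable singular point of it at `(1 : 0 : 0)` makes enough coefficients
vanish for `(F, G)` to have a limit along a one-parameter subgroup. If the orbit were closed, it
would contain this limit, whose stabilizer is infinite.

If `Δ₄ ≠ 0`, two members of the pencil are pairs of lines, and neither pair passes through the
vertex of the other. Hence `F` can be moved to the pencil of conics through four fixed points in
general position. An element of `G₄` fixing that pencil permutes the four points, which leaves
finitely many stabilizing elements. The linear forms `G` remaining beside it are separated, up to
the symmetries of the four points, by `Δ₄` and the invariants `I`, `J` of the quartic `G · k`;
hence the orbit is a common level set of these invariants.
-/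

open Matrix
open QuadraticMap (polar proj linMulLin)
open scoped RightActions

section LinePair

variable {m n R : Type*} [CommRing R] [Fintype n]

theorem polar_comp_mulVecLin (Q : QuadraticForm R (m → R)) (M : Matrix m n R)
    (x y : n → R) : polar (Q.comp M.mulVecLin) x y = polar Q (M *ᵥ x) (M *ᵥ y) := by
  simp only [polar, QuadraticMap.comp_apply, mulVecLin_apply, mulVec_add]

/-- The degenerate quadric formed by the hyperplanes `l · x = 0` and `l' · x = 0`. -/
def linePair (l l' : n → R) : QuadraticForm R (n → R) :=
  linMulLin (dotProductBilin R R l) (dotProductBilin R R l')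

theorem linePair_apply (l l' x : n → R) : linePair l l' x = (l ⬝ᵥ x) * (l' ⬝ᵥ x) := rfl

theorem polar_linePair (l l' x y : n → R) :
    polar (linePair l l') x y = (l ⬝ᵥ x) * (l' ⬝ᵥ y) + (l ⬝ᵥ y) * (l' ⬝ᵥ x) := by
  simp only [polar, linePair_apply, dotProduct_add]
  ring

theorem smul_linePair_smul (a b : R) (l l' : n → R) :
    linePair (a • l) (b • l') = (a * b) • linePair l l' := by
  ext x
  simp only [linePair_apply, smul_dotProduct, _root_.smul_apply, smul_eq_mul]
  ring

theorem linePair_comp [Fintype m] (l l' : m → R) (M : Matrix m n R) :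
    (linePair l l').comp M.mulVecLin = linePair (l ᵥ* M) (l' ᵥ* M) := by
  ext x
  simp only [QuadraticMap.comp_apply, linePair_apply, mulVecLin_apply, dotProduct_mulVec]

end LinePair

section Conic

variable {R : Type*} [CommRing R]

/-- A ternary quadratic form, identified with its coefficients at `X², Y², Z², XY, XZ, YZ` in this
order. -/
def conicCoeffs : QuadraticForm R (Fin 3 → R) ≃ₗ[R] (Fin 6 → R) where
  toFun Q :=
    ![Q ![1, 0, 0], Q ![0, 1, 0], Q ![0, 0, 1], polar Q ![1, 0, 0] ![0, 1, 0],
      polar Q ![1, 0, 0] ![0, 0, 1], polar Q ![0, 1, 0] ![0, 0, 1]]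
  invFun q := q 0 • proj 0 0 + q 1 • proj 1 1 + q 2 • proj 2 2 + q 3 • proj 0 1 + q 4 • proj 0 2
    + q 5 • proj 1 2
  map_add' Q Q' := by ext i; fin_cases i <;> simp [QuadraticMap.polar_add]
  map_smul' r Q := by ext i; fin_cases i <;> simp [QuadraticMap.polar_smul]
  left_inv Q := by
    ext x
    have hx : x = x 0 • ![1, 0, 0] + x 1 • ![0, 1, 0] + x 2 • ![0, 0, 1] := by
      ext i; fin_cases i <;> simp
    conv_rhs => rw [hx]
    simp only [QuadraticMap.map_add Q, QuadraticMap.map_smul, QuadraticMap.polar_add_left,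
      QuadraticMap.polar_smul_left, QuadraticMap.polar_smul_right]
    simp only [cons_val, _root_.add_apply, _root_.smul_apply, QuadraticMap.proj_apply, smul_eq_mul]
    ring
  right_inv q := by ext i; fin_cases i <;> simp [polar] <;> ring

theorem conic_apply (Q : QuadraticForm R (Fin 3 → R)) (x : Fin 3 → R) :
    Q x = conicCoeffs Q 0 * x 0 ^ 2 + conicCoeffs Q 1 * x 1 ^ 2 + conicCoeffs Q 2 * x 2 ^ 2
      + conicCoeffs Q 3 * (x 0 * x 1) + conicCoeffs Q 4 * (x 0 * x 2)
      + conicCoeffs Q 5 * (x 1 * x 2) := by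
  conv_lhs => rw [← conicCoeffs.symm_apply_apply Q]
  simp only [pow_two]
  rfl

/-- The discriminant `disc₂` of a ternary quadratic form. -/
def conicDisc (Q : QuadraticForm R (Fin 3 → R)) : R :=
  let q := conicCoeffs Q
  4 * q 0 * q 1 * q 2 + q 3 * q 4 * q 5 - q 0 * q 5 ^ 2 - q 1 * q 4 ^ 2 - q 2 * q 3 ^ 2

/-- The derivative of `conicDisc` at `Q` in the direction `Q'`. -/
def conicDiscPolar (Q Q' : QuadraticForm R (Fin 3 → R)) : R :=
  let q := conicCoeffs Q
  let q' := conicCoeffs Q'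
  q' 0 * (4 * q 1 * q 2 - q 5 ^ 2) + q' 1 * (4 * q 0 * q 2 - q 4 ^ 2)
    + q' 2 * (4 * q 0 * q 1 - q 3 ^ 2) + q' 3 * (q 4 * q 5 - 2 * q 2 * q 3)
    + q' 4 * (q 3 * q 5 - 2 * q 1 * q 4) + q' 5 * (q 3 * q 4 - 2 * q 0 * q 5)

theorem conicDisc_comp (Q : QuadraticForm R (Fin 3 → R)) (M : Matrix (Fin 3) (Fin 3) R) :
    conicDisc (Q.comp M.mulVecLin) = M.det ^ 2 * conicDisc Q := by
  have hM : conicCoeffs (Q.comp M.mulVecLin) =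
      ![Q (M.col 0), Q (M.col 1), Q (M.col 2), polar Q (M.col 0) (M.col 1),
        polar Q (M.col 0) (M.col 2), polar Q (M.col 1) (M.col 2)] := by
    have hcol : M *ᵥ ![1, 0, 0] = M.col 0 ∧ M *ᵥ ![0, 1, 0] = M.col 1 ∧
        M *ᵥ ![0, 0, 1] = M.col 2 := by
      refine ⟨?_, ?_, ?_⟩ <;> ext <;> simp [mulVec, dotProduct, Fin.sum_univ_three]
    simp only [conicCoeffs, LinearEquiv.coe_mk, LinearMap.coe_mk, AddHom.coe_mk,
      polar_comp_mulVecLin, QuadraticMap.comp_apply, mulVecLin_apply, hcol]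
  simp only [conicDisc, hM, polar, conic_apply Q, det_fin_three, Matrix.cons_val, col_apply,
    Pi.add_apply]
  ring

theorem conicDisc_smul (r : R) (Q : QuadraticForm R (Fin 3 → R)) :
    conicDisc (r • Q) = r ^ 3 * conicDisc Q := by
  simp only [conicDisc, map_smul, Pi.smul_apply, smul_eq_mul]
  ring

theorem conicCoeffs_linePair (l l' : Fin 3 → R) :
    conicCoeffs (linePair l l') =
      ![l 0 * l' 0, l 1 * l' 1, l 2 * l' 2, l 0 * l' 1 + l 1 * l' 0, l 0 * l' 2 + l 2 * l' 0,
        l 1 * l' 2 + l 2 * l' 1] := by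
  rw [← LinearEquiv.eq_symm_apply]
  ext x
  simp only [linePair_apply, dotProduct, Fin.sum_univ_three, conicCoeffs, LinearEquiv.symm_mk,
    LinearMap.coe_mk, AddHom.coe_mk, LinearEquiv.coe_mk, cons_val, _root_.add_apply,
    _root_.smul_apply, QuadraticMap.proj_apply, smul_eq_mul]
  ring

theorem conicDiscPolar_linePair (l l' : Fin 3 → R) (Q : QuadraticForm R (Fin 3 → R)) :
    conicDiscPolar (linePair l l') Q = -Q (l ⨯₃ l') := by
  simp only [conicDiscPolar, conicCoeffs_linePair, conic_apply Q, cross_apply, Matrix.cons_val]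
  ring

theorem conicDiscPolar_smul_left (a : R) (Q Q' : QuadraticForm R (Fin 3 → R)) :
    conicDiscPolar (a • Q) Q' = a ^ 2 * conicDiscPolar Q Q' := by
  simp only [conicDiscPolar, map_smul, Pi.smul_apply, smul_eq_mul]
  ring

theorem conicDisc_linePair (l l' : Fin 3 → R) : conicDisc (linePair l l') = 0 := by
  simp only [conicDisc, conicCoeffs_linePair, Matrix.cons_val]
  ring

end Conic

theorem exists_specialLinear_mulVec_eq_smul {n K : Type*} [Fintype n] [DecidableEq n] [Field K]
    {x y : n → K} (hx : x ≠ 0) (hy : y ≠ 0) :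
    ∃ (A : Matrix.SpecialLinearGroup n K) (a : Kˣ), A.1 *ᵥ x = a • y := by
  obtain ⟨A, hA⟩ := MulAction.exists_smul_eq (Matrix.SpecialLinearGroup n K)
    (Projectivization.mk K x hx) (Projectivization.mk K y hy)
  obtain ⟨a, ha⟩ := (Projectivization.mk_eq_mk_iff ..).mp hA
  exact ⟨A, a, ha.symm⟩

section IsAlgClosed

variable {L : Type*} [Field L] [IsAlgClosed L]

theorem exists_add_eq_mul_eq (b c : L) : ∃ s s' : L, s + s' = b ∧ s * s' = c := by
  obtain ⟨s, hs⟩ := IsAlgClosed.exists_root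
    (Polynomial.X ^ 2 + Polynomial.C (-b) * Polynomial.X + Polynomial.C c : Polynomial L)
    (ne_of_eq_of_ne (b := 2) (by compute_degree!) two_ne_zero)
  simp only [map_neg, neg_mul, Polynomial.IsRoot.def, Polynomial.eval_add, Polynomial.eval_pow,
    Polynomial.eval_X, Polynomial.eval_neg, Polynomial.eval_mul, Polynomial.eval_C] at hs
  exact ⟨s, b - s, by ring, by linear_combination -hs⟩

theorem exists_eq_linePair_of_conicCoeffs_zero_ne_zero {Q : QuadraticForm L (Fin 3 → L)}
    (hQ : conicDisc Q = 0) (h₀ : conicCoeffs Q 0 ≠ 0) : ∃ l l', Q = linePair l l' := by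
  set q := conicCoeffs Q with hq
  obtain ⟨s, s', hs, hs'⟩ := exists_add_eq_mul_eq (q 3 / q 0) (q 1 / q 0)
  obtain ⟨t, t', ht, ht'⟩ := exists_add_eq_mul_eq (q 4 / q 0) (q 2 / q 0)
  rw [eq_div_iff h₀] at hs hs' ht ht'
  have key : q 0 * ((q 5 - q 0 * (s * t' + s' * t)) * (q 5 - q 0 * (s * t + s' * t'))) = 0 := by
    rw [← neg_eq_zero, ← hQ, conicDisc]
    simp only [← hq, ← hs, ← hs', ← ht, ← ht']
    ring
  wlog hF : q 5 = q 0 * (s * t' + s' * t) generalizing t t'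
  · refine this t' t (by rwa [add_comm]) (by rwa [mul_comm t']) (by rw [← key]; ring) ?_
    have := ((mul_eq_zero_iff_left h₀).mp key)
    exact sub_eq_zero.mp ((mul_eq_zero.mp this).resolve_left (sub_ne_zero.mpr hF))
  refine ⟨![q 0, q 0 * s, q 0 * t], ![1, s', t'], conicCoeffs.injective ?_⟩
  rw [conicCoeffs_linePair, ← hq]
  ext i
  match i with
  | 0 | 1 | 2 | 3 | 4 | 5 =>
    simp only [cons_val, ← hs, ← hs', ← ht, ← ht', hF]
    ring

theorem exists_eq_linePair_of_conicDisc_eq_zero {Q : QuadraticForm L (Fin 3 → L)}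
    (hQ : conicDisc Q = 0) : ∃ l l', Q = linePair l l' := by
  by_cases h : ∃ p, Q p ≠ 0
  · obtain ⟨p, hp⟩ := h
    obtain ⟨B, a, hB⟩ := exists_specialLinear_mulVec_eq_smul (n := Fin 3)
      (x := ![1, 0, 0]) (y := p) (fun h => one_ne_zero (congr_fun h 0))
      (by rintro rfl; exact hp Q.map_zero)
    have hQB : conicCoeffs (Q.comp B.1.mulVecLin) 0 ≠ 0 := by
      change Q (B.1 *ᵥ ![1, 0, 0]) ≠ 0
      rw [hB, Units.smul_def, QuadraticMap.map_smul]
      simpa using hp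
    obtain ⟨l, l', hl⟩ := exists_eq_linePair_of_conicCoeffs_zero_ne_zero
      (by rw [conicDisc_comp, hQ, mul_zero]) hQB
    refine ⟨l ᵥ* (B⁻¹).1, l' ᵥ* (B⁻¹).1, ?_⟩
    rw [← linePair_comp, ← hl]
    ext x
    simp only [QuadraticMap.comp_apply, mulVecLin_apply, mulVec_mulVec,
      ← Matrix.SpecialLinearGroup.coe_mul, mul_inv_cancel, Matrix.SpecialLinearGroup.coe_one,
      one_mulVec]
  · push Not at h
    exact ⟨0, 0, by ext x; simp [h, linePair_apply]⟩

theorem exists_quadraticForm_eq_zero_of_one_lt_finrank {V : Type*} [AddCommGroup V] [Module L V]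
    (Q : QuadraticForm L V) (hV : 1 < Module.finrank L V) : ∃ p, p ≠ 0 ∧ Q p = 0 := by
  have := Module.nontrivial_of_finrank_pos (pos_of_gt hV)
  obtain ⟨v, hv₀⟩ := exists_ne (0 : V)
  obtain ⟨w, hvw⟩ := exists_linearIndependent_pair_of_one_lt_finrank hV hv₀
  by_cases hv : Q v = 0
  · exact ⟨v, hv₀, hv⟩
  · obtain ⟨s, s', hs, hs'⟩ := exists_add_eq_mul_eq (-polar Q v w / Q v) (Q w / Q v)
    refine ⟨s • v + w, fun h => ?_, ?_⟩
    · exact one_ne_zero (LinearIndependent.pair_iff.mp hvw s 1 (by rwa [one_smul])).2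
    · rw [eq_div_iff hv] at hs hs'
      rw [QuadraticMap.map_add Q, QuadraticMap.map_smul, QuadraticMap.polar_smul_left]
      linear_combination (exp := 1) s * hs - hs'

/-- If `Q` is a pair of distinct lines, then `conicDiscPolar Q Q'` is `-Q'` evaluated at their
intersection; if `Q` is a double line, then all its points are singular and it meets `Q'`. -/
theorem exists_singular_point {Q Q' : QuadraticForm L (Fin 3 → L)} (hQ : conicDisc Q = 0)
    (hQ' : conicDiscPolar Q Q' = 0) :
    ∃ p, p ≠ 0 ∧ Q p = 0 ∧ (∀ x, polar Q p x = 0) ∧ Q' p = 0 := by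
  obtain ⟨l, l', rfl⟩ := exists_eq_linePair_of_conicDisc_eq_zero hQ
  simp only [linePair_apply, polar_linePair]
  by_cases hll' : l ⨯₃ l' = 0
  · obtain ⟨n, a, b, rfl, rfl⟩ : ∃ (n : Fin 3 → L) (a b : L), l = a • n ∧ l' = b • n := by
      by_cases hl : l = 0
      · exact ⟨l', 0, 1, by simp [hl]⟩
      · rw [← not_ne_iff, crossProduct_ne_zero_iff_linearIndependent,
          LinearIndependent.pair_iff' hl] at hll'
        push Not at hll'
        obtain ⟨b, rfl⟩ := hll'
        exact ⟨l, 1, b, by simp⟩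
    have hker : 1 < Module.finrank L (dotProductBilin L L n).ker := by
      have h := (dotProductBilin L L n).finrank_range_add_finrank_ker
      have hrange := (dotProductBilin L L n).range.finrank_le
      rw [Module.finrank_self] at hrange
      rw [Module.finrank_fin_fun] at h
      lia
    obtain ⟨⟨p, hp⟩, hp₀, hQp⟩ := exists_quadraticForm_eq_zero_of_one_lt_finrank
      (Q'.comp (dotProductBilin L L n).ker.subtype) hker
    have hnp : n ⬝ᵥ p = 0 := hp
    exact ⟨p, fun h => hp₀ (Subtype.ext h), by simp [hnp], by simp [hnp], hQp⟩
  · exact ⟨l ⨯₃ l', hll', by simp, by simp, by simpa [conicDiscPolar_linePair] using hQ'⟩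

end IsAlgClosed

section BinaryCubic

variable {R : Type*} [CommRing R]

/-- The value at `u = (U, W)` of the binary cubic form `aU³ + bU²W + cUW² + dW³`. -/
def binaryCubicEval (k : Cubic R) (u : Fin 2 → R) : R :=
  k.a * u 0 ^ 3 + k.b * (u 0 ^ 2 * u 1) + k.c * (u 0 * u 1 ^ 2) + k.d * u 1 ^ 3

/-- The derivative at `u` in the direction `w` of the binary cubic form with coefficients `k`. -/
def binaryCubicPolar (k : Cubic R) (u w : Fin 2 → R) : R :=
  (3 * k.a * u 0 ^ 2 + 2 * k.b * (u 0 * u 1) + k.c * u 1 ^ 2) * w 0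
    + (k.b * u 0 ^ 2 + 2 * k.c * (u 0 * u 1) + 3 * k.d * u 1 ^ 2) * w 1

theorem binaryCubicEval_injective [IsDomain R] [Infinite R] :
    Function.Injective (binaryCubicEval (R := R)) := by
  intro k k' h
  refine (Cubic.toPoly_injective k k').mp (Polynomial.funext fun x => ?_)
  simpa [Cubic.toPoly, binaryCubicEval] using congr_fun h ![x, 1]

theorem binaryCubicEval_smul (k : Cubic R) (a : R) (u : Fin 2 → R) :
    binaryCubicEval k (a • u) = a ^ 3 * binaryCubicEval k u := by
  simp only [binaryCubicEval, Pi.smul_apply, smul_eq_mul]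
  ring

/-- The binary cubic form obtained by the substitution `u ↦ M u`. -/
def binaryCubicComp (k : Cubic R) (M : Matrix (Fin 2) (Fin 2) R) : Cubic R where
  a := binaryCubicEval k (M.col 0)
  b := binaryCubicPolar k (M.col 0) (M.col 1)
  c := binaryCubicPolar k (M.col 1) (M.col 0)
  d := binaryCubicEval k (M.col 1)

theorem binaryCubicEval_comp (k : Cubic R) (M : Matrix (Fin 2) (Fin 2) R) (u : Fin 2 → R) :
    binaryCubicEval (binaryCubicComp k M) u = binaryCubicEval k (M *ᵥ u) := by
  simp only [binaryCubicEval, binaryCubicComp, binaryCubicPolar, col_apply, mulVec, dotProduct,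
    Fin.sum_univ_two]
  ring

theorem discr_binaryCubicComp (k : Cubic R) (M : Matrix (Fin 2) (Fin 2) R) :
    (binaryCubicComp k M).discr = M.det ^ 6 * k.discr := by
  simp only [Cubic.discr, binaryCubicEval, binaryCubicComp, binaryCubicPolar, col_apply,
    det_fin_two]
  ring

/-- The binary cubic form `(l · u) (m · u) (n · u)`. -/
def binaryCubicOfFactors (l m n : Fin 2 → R) : Cubic R where
  a := l 0 * m 0 * n 0
  b := l 0 * m 0 * n 1 + l 0 * m 1 * n 0 + l 1 * m 0 * n 0
  c := l 0 * m 1 * n 1 + l 1 * m 0 * n 1 + l 1 * m 1 * n 0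
  d := l 1 * m 1 * n 1

theorem binaryCubicEval_ofFactors (l m n u : Fin 2 → R) :
    binaryCubicEval (binaryCubicOfFactors l m n) u = (l ⬝ᵥ u) * (m ⬝ᵥ u) * (n ⬝ᵥ u) := by
  simp only [binaryCubicEval, binaryCubicOfFactors, dotProduct, Fin.sum_univ_two]
  ring

theorem binaryCubicPolar_ofFactors (l m n u w : Fin 2 → R) :
    binaryCubicPolar (binaryCubicOfFactors l m n) u w = (l ⬝ᵥ w) * (m ⬝ᵥ u) * (n ⬝ᵥ u)
      + (l ⬝ᵥ u) * (m ⬝ᵥ w) * (n ⬝ᵥ u) + (l ⬝ᵥ u) * (m ⬝ᵥ u) * (n ⬝ᵥ w) := by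
  simp only [binaryCubicPolar, binaryCubicOfFactors, dotProduct, Fin.sum_univ_two]
  ring

theorem discr_binaryCubicOfFactors (l m n : Fin 2 → R) :
    (binaryCubicOfFactors l m n).discr =
      (det (of ![l, m]) * det (of ![l, n]) * det (of ![m, n])) ^ 2 := by
  simp only [Cubic.discr, binaryCubicOfFactors, det_fin_two, of_apply, cons_val_zero, cons_val_one]
  ring

variable {L : Type*} [Field L] [IsAlgClosed L]

theorem exists_eq_binaryCubicOfFactors (k : Cubic L) :
    ∃ l m n, k = binaryCubicOfFactors l m n := by
  by_cases ha : k.a = 0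
  · by_cases hb : k.b = 0
    · refine ⟨![0, 1], ![0, 1], ![k.c, k.d], ?_⟩
      ext <;> simp [binaryCubicOfFactors, ha, hb]
    · obtain ⟨s, s', hs, hs'⟩ := exists_add_eq_mul_eq (k.c / k.b) (k.d / k.b)
      rw [eq_div_iff hb] at hs hs'
      refine ⟨![0, 1], ![1, s], ![k.b, k.b * s'], ?_⟩
      ext <;> simp [binaryCubicOfFactors, ha, ← hs, ← hs'] <;> ring
  · obtain ⟨x, y, z, h⟩ := (Cubic.splits_iff_roots_eq_three (φ := RingHom.id L) ha).mp
      (IsAlgClosed.splits _)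
    have hb := Cubic.b_eq_three_roots ha h
    have hc := Cubic.c_eq_three_roots ha h
    have hd := Cubic.d_eq_three_roots ha h
    simp only [RingHom.id_apply] at hb hc hd
    refine ⟨![k.a, k.a * -x], ![1, -y], ![1, -z], ?_⟩
    ext <;> simp [binaryCubicOfFactors, hb, hc, hd] <;> ring

theorem exists_binaryCubicEval_eq_zero (k : Cubic L) : ∃ p, p ≠ 0 ∧ binaryCubicEval k p = 0 := by
  obtain ⟨l, m, n, rfl⟩ := exists_eq_binaryCubicOfFactors k
  obtain ⟨p, hp, hlp⟩ := exists_mulVec_eq_zero_iff.mpr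
    (show det (of ![l, l]) = 0 from det_zero_of_row_eq zero_ne_one rfl)
  have hl : l ⬝ᵥ p = 0 := congr_fun hlp 0
  exact ⟨p, hp, by rw [binaryCubicEval_ofFactors, hl, zero_mul, zero_mul]⟩

theorem exists_double_zero_of_discr_eq_zero {k : Cubic L} (hk : k.discr = 0) :
    ∃ p, p ≠ 0 ∧ binaryCubicEval k p = 0 ∧ ∀ w, binaryCubicPolar k p w = 0 := by
  obtain ⟨l, m, n, rfl⟩ := exists_eq_binaryCubicOfFactors k
  have double_zero : ∀ l m : Fin 2 → L, det (of ![l, m]) = 0 →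
      ∃ p, p ≠ 0 ∧ l ⬝ᵥ p = 0 ∧ m ⬝ᵥ p = 0 := by
    intro l m h
    obtain ⟨p, hp, hlm⟩ := exists_mulVec_eq_zero_iff.mpr h
    exact ⟨p, hp, congr_fun hlm 0, congr_fun hlm 1⟩
  simp only [binaryCubicEval_ofFactors, binaryCubicPolar_ofFactors]
  rw [discr_binaryCubicOfFactors, sq_eq_zero_iff, mul_eq_zero, mul_eq_zero] at hk
  obtain (h | h) | h := hk <;> obtain ⟨p, hp, h₁, h₂⟩ := double_zero _ _ h <;>
    exact ⟨p, hp, by simp [h₁, h₂], by simp [h₁, h₂]⟩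

theorem exists_two_zeros_of_discr_ne_zero {k : Cubic L} (hk : k.discr ≠ 0) :
    ∃ p q, det (of ![p, q]) ≠ 0 ∧ binaryCubicEval k p = 0 ∧ binaryCubicEval k q = 0 := by
  obtain ⟨l, m, n, rfl⟩ := exists_eq_binaryCubicOfFactors k
  have hl : l ⬝ᵥ ![-l 1, l 0] = 0 := by simp [dotProduct, mul_comm]
  have hm : m ⬝ᵥ ![-m 1, m 0] = 0 := by simp [dotProduct, mul_comm]
  refine ⟨![-l 1, l 0], ![-m 1, m 0], fun h => hk ?_, ?_, ?_⟩
  · have hlm : det (of ![l, m]) = 0 := by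
      rw [← h]
      simp only [det_fin_two, of_apply, cons_val_zero, cons_val_one]
      ring
    simp only [discr_binaryCubicOfFactors, hlm, zero_mul, ne_eq, OfNat.ofNat_ne_zero,
      not_false_eq_true, zero_pow]
  · rw [binaryCubicEval_ofFactors, hl, zero_mul, zero_mul]
  · rw [binaryCubicEval_ofFactors, hm, mul_zero, zero_mul]

end BinaryCubic

section BinaryQuartic

variable {R : Type*} [CommRing R]

/-- The product of the linear form `mU + nW` with the binary cubic form `k`, as coefficients at
`U⁴, …, W⁴`. -/
def linearMulCubic (m n : R) (k : Cubic R) : Fin 5 → R :=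
  ![m * k.a, m * k.b + n * k.a, m * k.c + n * k.b, m * k.d + n * k.c, n * k.d]

/-- The binary quartic form obtained from `q` by the substitution `u ↦ M u`. -/
def quarticComp (q : Fin 5 → R) (M : Matrix (Fin 2) (Fin 2) R) : Fin 5 → R :=
  let x := M 0 0
  let y := M 0 1
  let z := M 1 0
  let w := M 1 1
  ![q 0 * x ^ 4 + q 1 * x ^ 3 * z + q 2 * x ^ 2 * z ^ 2 + q 3 * x * z ^ 3 + q 4 * z ^ 4,
    4 * q 0 * x ^ 3 * y + q 1 * (x ^ 3 * w + 3 * x ^ 2 * y * z)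
      + q 2 * (2 * x ^ 2 * z * w + 2 * x * y * z ^ 2) + q 3 * (3 * x * z ^ 2 * w + y * z ^ 3)
      + 4 * q 4 * z ^ 3 * w,
    6 * q 0 * x ^ 2 * y ^ 2 + q 1 * (3 * x ^ 2 * y * w + 3 * x * y ^ 2 * z)
      + q 2 * (x ^ 2 * w ^ 2 + 4 * x * y * z * w + y ^ 2 * z ^ 2)
      + q 3 * (3 * x * z * w ^ 2 + 3 * y * z ^ 2 * w) + 6 * q 4 * z ^ 2 * w ^ 2,
    4 * q 0 * x * y ^ 3 + q 1 * (3 * x * y ^ 2 * w + y ^ 3 * z)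
      + q 2 * (2 * x * y * w ^ 2 + 2 * y ^ 2 * z * w) + q 3 * (x * w ^ 3 + 3 * y * z * w ^ 2)
      + 4 * q 4 * z * w ^ 3,
    q 0 * y ^ 4 + q 1 * y ^ 3 * w + q 2 * y ^ 2 * w ^ 2 + q 3 * y * w ^ 3 + q 4 * w ^ 4]

theorem quarticComp_linearMulCubic (m n : R) (k : Cubic R) (M : Matrix (Fin 2) (Fin 2) R) :
    quarticComp (linearMulCubic m n k) M =
      linearMulCubic (m * M 0 0 + n * M 1 0) (m * M 0 1 + n * M 1 1) (binaryCubicComp k M) := by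
  simp only [quarticComp, linearMulCubic, binaryCubicComp, binaryCubicEval, binaryCubicPolar,
    Matrix.cons_val, col_apply]
  congrm ![?_, ?_, ?_, ?_, ?_] <;> ring

/-- The invariant of degree two of a binary quartic form. -/
def quarticI (q : Fin 5 → R) : R :=
  q 2 ^ 2 - 3 * q 1 * q 3 + 12 * q 0 * q 4

/-- The invariant of degree three of a binary quartic form. -/
def quarticJ (q : Fin 5 → R) : R :=
  2 * q 2 ^ 3 - 9 * q 1 * q 2 * q 3 - 72 * q 0 * q 2 * q 4 + 27 * q 0 * q 3 ^ 2 + 27 * q 1 ^ 2 * q 4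

theorem quarticI_comp (q : Fin 5 → R) (M : Matrix (Fin 2) (Fin 2) R) :
    quarticI (quarticComp q M) = M.det ^ 4 * quarticI q := by
  simp only [quarticI, quarticComp, det_fin_two, Matrix.cons_val]
  ring

theorem quarticJ_comp (q : Fin 5 → R) (M : Matrix (Fin 2) (Fin 2) R) :
    quarticJ (quarticComp q M) = M.det ^ 6 * quarticJ q := by
  simp only [quarticJ, quarticComp, det_fin_two, Matrix.cons_val]
  ring

end BinaryQuartic

section Pencil

variable {R : Type*} [CommRing R]

/-- The conic `F(u, ·)`, for the pair `(F, G)` with coordinates `c`. -/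
def pencil (c : Fin 14 → R) (u : Fin 2 → R) : QuadraticForm R (Fin 3 → R) :=
  conicCoeffs.symm
    ![c 0 * u 0 + c 1 * u 1, c 2 * u 0 + c 3 * u 1, c 4 * u 0 + c 5 * u 1,
      c 6 * u 0 + c 7 * u 1, c 8 * u 0 + c 9 * u 1, c 10 * u 0 + c 11 * u 1]

/-- The value `G(u)`, for the pair `(F, G)` with coordinates `c`. -/
def linForm (c : Fin 14 → R) (u : Fin 2 → R) : R :=
  c 12 * u 0 + c 13 * u 1

/-- The coordinates of the pair `(U Q₀ + W Q₁, m U + n W)`. -/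
def ofPencil (Q₀ Q₁ : QuadraticForm R (Fin 3 → R)) (m n : R) : Fin 14 → R :=
  let q := conicCoeffs Q₀
  let q' := conicCoeffs Q₁
  ![q 0, q' 0, q 1, q' 1, q 2, q' 2, q 3, q' 3, q 4, q' 4, q 5, q' 5, m, n]

theorem conicCoeffs_pencil (c : Fin 14 → R) (u : Fin 2 → R) :
    conicCoeffs (pencil c u) =
      ![c 0 * u 0 + c 1 * u 1, c 2 * u 0 + c 3 * u 1, c 4 * u 0 + c 5 * u 1,
        c 6 * u 0 + c 7 * u 1, c 8 * u 0 + c 9 * u 1, c 10 * u 0 + c 11 * u 1] :=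
  conicCoeffs.apply_symm_apply _

theorem pencil_eq_add (c : Fin 14 → R) (u : Fin 2 → R) :
    pencil c u = u 0 • pencil c ![1, 0] + u 1 • pencil c ![0, 1] := by
  refine conicCoeffs.injective ?_
  rw [map_add, map_smul, map_smul]
  ext i
  fin_cases i <;> simp [conicCoeffs_pencil, mul_comm]

theorem linForm_eq_add (c : Fin 14 → R) (u : Fin 2 → R) :
    linForm c u = u 0 * linForm c ![1, 0] + u 1 * linForm c ![0, 1] := by
  simp [linForm, mul_comm]

theorem ofPencil_pencil (c : Fin 14 → R) :
    ofPencil (pencil c ![1, 0]) (pencil c ![0, 1]) (linForm c ![1, 0]) (linForm c ![0, 1]) = c := by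
  ext i
  fin_cases i <;> simp [ofPencil, conicCoeffs_pencil, linForm]

theorem pencil_ofPencil (Q₀ Q₁ : QuadraticForm R (Fin 3 → R)) (m n : R) (u : Fin 2 → R) :
    pencil (ofPencil Q₀ Q₁ m n) u = u 0 • Q₀ + u 1 • Q₁ := by
  refine conicCoeffs.injective ?_
  rw [conicCoeffs_pencil, map_add, map_smul, map_smul]
  ext i
  fin_cases i <;> simp [ofPencil, mul_comm]

theorem linForm_ofPencil (Q₀ Q₁ : QuadraticForm R (Fin 3 → R)) (m n : R) (u : Fin 2 → R) :
    linForm (ofPencil Q₀ Q₁ m n) u = u 0 * m + u 1 * n := by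
  simp [linForm, ofPencil, mul_comm]

theorem pencil_linForm_ext {c c' : Fin 14 → R} (hF : ∀ u, pencil c u = pencil c' u)
    (hG : ∀ u, linForm c u = linForm c' u) : c = c' := by
  rw [← ofPencil_pencil c, ← ofPencil_pencil c']
  simp only [hF, hG]

theorem pencil_smul_right (c : Fin 14 → R) (a : R) (u : Fin 2 → R) :
    pencil c (a • u) = a • pencil c u := by
  rw [pencil_eq_add, pencil_eq_add c u, smul_add, smul_smul, smul_smul]
  rfl

theorem linForm_smul_right (c : Fin 14 → R) (a : R) (u : Fin 2 → R) :
    linForm c (a • u) = a * linForm c u := by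
  simp only [linForm, Pi.smul_apply, smul_eq_mul]
  ring

/-- The binary cubic `disc₂(F)`, for the pair `(F, G)` with coordinates `c`. -/
def discCubic (c : Fin 14 → R) : Cubic R where
  a := conicDisc (pencil c ![1, 0])
  b := conicDiscPolar (pencil c ![1, 0]) (pencil c ![0, 1])
  c := conicDiscPolar (pencil c ![0, 1]) (pencil c ![1, 0])
  d := conicDisc (pencil c ![0, 1])

theorem binaryCubicEval_discCubic (c : Fin 14 → R) (u : Fin 2 → R) :
    binaryCubicEval (discCubic c) u = conicDisc (pencil c u) := by
  simp only [binaryCubicEval, discCubic, conicDisc, conicDiscPolar, conicCoeffs_pencil,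
    Matrix.cons_val]
  ring

theorem binaryCubicPolar_discCubic (c : Fin 14 → R) (u w : Fin 2 → R) :
    binaryCubicPolar (discCubic c) u w = conicDiscPolar (pencil c u) (pencil c w) := by
  simp only [binaryCubicPolar, discCubic, conicDisc, conicDiscPolar, conicCoeffs_pencil,
    Matrix.cons_val]
  ring

theorem v4QuarticCoeffs_eq_linearMulCubic (c : Fin 14 → R) :
    v4QuarticCoeffs c = linearMulCubic (c 12) (c 13) (discCubic c) := by
  simp only [linearMulCubic, discCubic, conicDisc, conicDiscPolar, conicCoeffs_pencil,
    v4QuarticCoeffs, Matrix.cons_val]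
  congrm ![?_, ?_, ?_, ?_, ?_] <;> ring

/-- `(c 13, -c 12)` is the zero of `G`, so this is `disc(G · k) = disc(k) · Res(G, k)²`. -/
theorem Delta4_eq_discr_mul (c : Fin 14 → R) :
    Delta4 c = (discCubic c).discr * binaryCubicEval (discCubic c) ![c 13, -c 12] ^ 2 := by
  simp only [Delta4, v4QuarticCoeffs_eq_linearMulCubic, linearMulCubic, disc4, Cubic.discr,
    binaryCubicEval, Matrix.cons_val]
  ring

end Pencil

section Action

variable {L : Type*} [Field L]

/-- The group `G₄`. -/
abbrev Group4 (L : Type*) [Field L] : Type _ :=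
  Matrix.SpecialLinearGroup (Fin 2) L × Matrix.SpecialLinearGroup (Fin 3) L × Lˣ

/-- The action of `G₄` in coordinates. Substituting by `g` and then by `h` amounts to substituting
by `g * h`, so this is a right action. -/
instance : SMul (Group4 L)ᵐᵒᵖ (Fin 14 → L) where
  smul g c :=
    let (A, B, t) := g.unop
    ofPencil (t⁻¹ • (pencil c (A.1.col 0)).comp B.1.mulVecLin)
      (t⁻¹ • (pencil c (A.1.col 1)).comp B.1.mulVecLin)
      (t ^ 3 * linForm c (A.1.col 0)) (t ^ 3 * linForm c (A.1.col 1))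

theorem pencil_smul (c : Fin 14 → L) (g : Group4 L) (u : Fin 2 → L) :
    pencil (c <• g) u = g.2.2⁻¹ • (pencil c (g.1.1 *ᵥ u)).comp g.2.1.1.mulVecLin := by
  refine (pencil_ofPencil _ _ _ _ u).trans ?_
  rw [pencil_eq_add c (g.1.1 *ᵥ u), pencil_eq_add c (g.1.1.col 0), pencil_eq_add c (g.1.1.col 1)]
  ext x
  simp only [_root_.add_apply, _root_.smul_apply, QuadraticMap.comp_apply, smul_eq_mul,
    Units.smul_def, mulVec, dotProduct, Fin.sum_univ_two, col_apply]
  ring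

theorem linForm_smul (c : Fin 14 → L) (g : Group4 L) (u : Fin 2 → L) :
    linForm (c <• g) u = g.2.2 ^ 3 * linForm c (g.1.1 *ᵥ u) := by
  refine (linForm_ofPencil _ _ _ _ u).trans ?_
  rw [linForm_eq_add c (g.1.1 *ᵥ u), linForm_eq_add c (g.1.1.col 0),
    linForm_eq_add c (g.1.1.col 1)]
  simp only [mulVec, dotProduct, Fin.sum_univ_two, col_apply]
  ring

theorem smul_apply_twelve (c : Fin 14 → L) (g : Group4 L) :
    (c <• g) 12 = g.2.2 ^ 3 * (c 12 * g.1.1 0 0 + c 13 * g.1.1 1 0) :=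
  rfl

theorem smul_apply_thirteen (c : Fin 14 → L) (g : Group4 L) :
    (c <• g) 13 = g.2.2 ^ 3 * (c 12 * g.1.1 0 1 + c 13 * g.1.1 1 1) :=
  rfl

instance : MulAction (Group4 L)ᵐᵒᵖ (Fin 14 → L) where
  one_smul c := by
    rw [← MulOpposite.op_one]
    refine pencil_linForm_ext (fun u => ?_) fun u => ?_
    · ext x
      rw [pencil_smul]
      simp
    · rw [linForm_smul]
      simp
  mul_smul h g c := by
    rw [← MulOpposite.op_unop h, ← MulOpposite.op_unop g, ← MulOpposite.op_mul]
    refine pencil_linForm_ext (fun u => ?_) fun u => ?_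
    · ext x
      simp only [pencil_smul, Prod.fst_mul, Prod.snd_mul, mul_inv,
        Matrix.SpecialLinearGroup.coe_mul, _root_.smul_apply, QuadraticMap.comp_apply,
        mulVecLin_apply, mulVec_mulVec, smul_smul, mul_comm g.unop.2.2⁻¹]
    · simp only [linForm_smul, Prod.fst_mul, Prod.snd_mul, Matrix.SpecialLinearGroup.coe_mul,
        mulVec_mulVec, Units.val_mul, mul_pow]
      ring

theorem eval_sub4 (A : Matrix.SpecialLinearGroup (Fin 2) L)
    (B : Matrix.SpecialLinearGroup (Fin 3) L) (v : MvPolynomial (Fin 2 ⊕ Fin 3) L)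
    (u : Fin 2 → L) (x : Fin 3 → L) :
    (sub4 A B v).eval (Sum.elim u x) = v.eval (Sum.elim (A.1 *ᵥ u) (B.1 *ᵥ x)) := by
  induction v using MvPolynomial.induction_on with
  | C a => simp [sub4]
  | add p q hp hq => simpa [sub4] using congr($hp + $hq)
  | mul_X p i hp =>
    rw [map_mul, ← hp]
    rcases i with i | i <;> simp [sub4, mulVec_eq_sum, mul_comm]

theorem eval_toV4_fst (c : Fin 14 → L) (u : Fin 2 → L) (x : Fin 3 → L) :
    (toV4 c).1.eval (Sum.elim u x) = pencil c u x := by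
  simp [toV4, conic_apply, conicCoeffs_pencil]

theorem eval_toV4_snd (c : Fin 14 → L) (u : Fin 2 → L) (x : Fin 3 → L) :
    (toV4 c).2.eval (Sum.elim u x) = linForm c u := by
  simp [toV4, linForm]

theorem toV4_injective : Function.Injective (toV4 (L := L)) := by
  intro c c' h
  refine pencil_linForm_ext (fun u => ?_) fun u => ?_
  · ext x
    rw [← eval_toV4_fst, ← eval_toV4_fst, h]
  · rw [← eval_toV4_snd c u 0, ← eval_toV4_snd c' u 0, h]

theorem act4_toV4 [Infinite L] (g : Group4 L) (c : Fin 14 → L) :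
    act4 g (toV4 c) = toV4 (c <• g) := by
  have funext_sumElim : ∀ p q : MvPolynomial (Fin 2 ⊕ Fin 3) L,
      (∀ u x, p.eval (Sum.elim u x) = q.eval (Sum.elim u x)) → p = q := by
    refine fun p q h => MvPolynomial.funext fun y => ?_
    rw [← Sum.elim_comp_inl_inr y, h]
  refine Prod.ext (funext_sumElim _ _ fun u x => ?_) (funext_sumElim _ _ fun u x => ?_)
  · simp [act4, eval_sub4, eval_toV4_fst, pencil_smul, Units.smul_def]
  · simp [act4, eval_sub4, eval_toV4_snd, linForm_smul]

theorem stable4_iff_isZariskiClosed_orbit [Infinite L] (c : Fin 14 → L) :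
    Stable4 c ↔ IsZariskiClosed (MulAction.orbit (Group4 L)ᵐᵒᵖ c) ∧
      (MulAction.stabilizer (Group4 L)ᵐᵒᵖ c : Set (Group4 L)ᵐᵒᵖ).Finite := by
  have horbit : {c' | ∃ g : Group4 L, toV4 c' = act4 g (toV4 c)} =
      MulAction.orbit (Group4 L)ᵐᵒᵖ c := by
    ext c'
    simp [act4_toV4, toV4_injective.eq_iff, MulAction.mem_orbit_iff, eq_comm]
  have hstab : {g : Group4 L | act4 g (toV4 c) = toV4 c} =
      MulOpposite.op ⁻¹' (MulAction.stabilizer (Group4 L)ᵐᵒᵖ c : Set (Group4 L)ᵐᵒᵖ) := by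
    ext g
    simp [act4_toV4, toV4_injective.eq_iff]
  rw [Stable4, horbit, hstab]
  exact and_congr_right fun _ => ⟨fun h => h.of_preimage MulOpposite.op_surjective,
    fun h => h.preimage MulOpposite.op_injective.injOn⟩

theorem stable4_smul_iff [Infinite L] (c : Fin 14 → L) (g : Group4 L) :
    Stable4 (c <• g) ↔ Stable4 c := by
  rw [stable4_iff_isZariskiClosed_orbit, stable4_iff_isZariskiClosed_orbit,
    MulAction.orbit_smul, MulAction.stabilizer_smul_eq_stabilizer_map_conj, Subgroup.coe_map,
    MulEquiv.coe_toMonoidHom, Set.finite_image_iff (MulEquiv.injective _).injOn]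

end Action

section Invariance

variable {L : Type*} [Field L] [Infinite L]

theorem discCubic_smul (c : Fin 14 → L) (g : Group4 L) :
    discCubic (c <• g) = binaryCubicComp (discCubic c) (g.2.2⁻¹ • g.1.1) := by
  refine binaryCubicEval_injective (funext fun u => ?_)
  have hdisc : conicDisc (pencil (c <• g) u) =
      (g.2.2 : L)⁻¹ ^ 3 * conicDisc (pencil c (g.1.1 *ᵥ u)) := by
    rw [pencil_smul, Units.smul_def, conicDisc_smul, conicDisc_comp, g.2.1.2, one_pow, one_mul,
      Units.val_inv_eq_inv_val]
  rw [binaryCubicEval_discCubic, hdisc, binaryCubicEval_comp, ← binaryCubicEval_discCubic,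
    Units.smul_def, Units.val_inv_eq_inv_val, smul_mulVec, binaryCubicEval_smul]

theorem v4QuarticCoeffs_smul (c : Fin 14 → L) (g : Group4 L) :
    v4QuarticCoeffs (c <• g) = quarticComp (v4QuarticCoeffs c) g.1.1 := by
  rw [v4QuarticCoeffs_eq_linearMulCubic, v4QuarticCoeffs_eq_linearMulCubic,
    quarticComp_linearMulCubic, discCubic_smul, smul_apply_twelve, smul_apply_thirteen]
  have ht : (g.2.2 : L) ≠ 0 := g.2.2.ne_zero
  simp only [linearMulCubic, binaryCubicComp, binaryCubicEval, binaryCubicPolar, col_apply,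
    Matrix.smul_apply, Units.smul_def, Units.val_inv_eq_inv_val, smul_eq_mul]
  congrm ![?_, ?_, ?_, ?_, ?_] <;> field

theorem Delta4_smul (c : Fin 14 → L) (g : Group4 L) : Delta4 (c <• g) = Delta4 c := by
  have ht : (g.2.2 : L) ≠ 0 := g.2.2.ne_zero
  have hA : g.1.1 0 0 * g.1.1 1 1 - g.1.1 0 1 * g.1.1 1 0 = 1 := by
    rw [← det_fin_two, g.1.2]
  have hzero : (g.2.2⁻¹ • g.1.1) *ᵥ ![(c <• g) 13, -(c <• g) 12] =
      (g.2.2 : L) ^ 2 • ![c 13, -c 12] := by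
    rw [smul_apply_twelve, smul_apply_thirteen]
    ext i
    fin_cases i <;> simp [mulVec, dotProduct, Units.smul_def] <;> field_simp
    · linear_combination c 13 * hA
    · linear_combination -c 12 * hA
  have hdet : (g.2.2⁻¹ • g.1.1).det = (g.2.2 : L)⁻¹ ^ 2 := by
    rw [Units.smul_def, det_smul, g.1.2, Fintype.card_fin, mul_one, Units.val_inv_eq_inv_val]
  rw [Delta4_eq_discr_mul, Delta4_eq_discr_mul, discCubic_smul, discr_binaryCubicComp,
    binaryCubicEval_comp, hzero, binaryCubicEval_smul, hdet]
  field

end Invariance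

section OneParameterSubgroup

variable {n : ℕ} {K : Type*} [Field K] [Infinite K]

theorem IsZariskiClosed.limit_mem {S : Set (Fin n → K)} (hS : IsZariskiClosed S) (c : Fin n → K)
    (k : Fin n → ℕ) (h : ∀ s : Kˣ, (fun i => (s : K) ^ k i * c i) ∈ S) :
    (fun i => 0 ^ k i * c i) ∈ S := by
  obtain ⟨P, rfl⟩ := hS
  intro p hp
  set f : Polynomial K :=
    MvPolynomial.aeval (fun i => Polynomial.X ^ k i * Polynomial.C (c i)) p with hf
  have heval : ∀ s : K, f.eval s = MvPolynomial.eval (fun i => s ^ k i * c i) p := by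
    intro s
    rw [hf, ← Polynomial.coe_evalRingHom, ← MvPolynomial.coe_aeval_eq_eval, MvPolynomial.aeval_def,
      MvPolynomial.hom_eval₂, MvPolynomial.coe_aeval_eq_eval, MvPolynomial.eval,
      MvPolynomial.coe_eval₂Hom]
    congr 1
    · ext a
      simp
    · ext i
      simp [mul_comm (c i)]
  have hf0 : f = 0 := by
    refine Polynomial.eq_zero_of_infinite_isRoot f
      (Set.Infinite.mono (fun s hs => ?_) (Set.finite_singleton 0).infinite_compl)
    exact (heval s).trans (h (Units.mk0 s hs) p hp)
  rw [← heval, hf0, Polynomial.eval_zero]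

/-- If `λ(s) • c` has a limit as `s → 0`, the limit lies in the closed orbit of `c` and its
stabilizer contains all `λ(s)`. -/
theorem infinite_stabilizer_of_isZariskiClosed_orbit {G : Type*} [Group G]
    [MulAction G (Fin n → K)] {c : Fin n → K} (hc : IsZariskiClosed (MulAction.orbit G c))
    {lam : Kˣ → G} (hlam : Function.Injective lam) {w : Fin n → ℤ}
    (hw : ∀ (s : Kˣ) (d : Fin n → K) i, (lam s • d) i = (s : K) ^ w i * d i)
    (hcw : ∀ i, w i < 0 → c i = 0) :
    (MulAction.stabilizer G c : Set G).Infinite := by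
  have hlim : (fun i => (0 : K) ^ (w i).toNat * c i) ∈ MulAction.orbit G c := by
    refine hc.limit_mem c _ fun s => ⟨lam s, funext fun i => ?_⟩
    refine (hw s c i).trans ?_
    obtain hi | hi := lt_or_ge (w i) 0
    · rw [hcw i hi, mul_zero, mul_zero]
    · rw [← zpow_natCast, Int.toNat_of_nonneg hi]
  have hfix : Set.range lam ⊆ MulAction.stabilizer G fun i => (0 : K) ^ (w i).toNat * c i := by
    rintro _ ⟨s, rfl⟩
    refine MulAction.mem_stabilizer_iff.mpr (funext fun i => ?_)
    rw [hw]
    obtain hi | hi | hi := lt_trichotomy (w i) 0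
    · rw [hcw i hi, mul_zero, mul_zero]
    · rw [hi, zpow_zero, one_mul]
    · rw [zero_pow (by lia), zero_mul, mul_zero]
  have hunits : Infinite Kˣ := by
    have := (Set.finite_singleton (0 : K)).infinite_compl.to_subtype
    exact .of_injective (fun x : ({0}ᶜ : Set K) => Units.mk0 x.1 x.2)
      fun x y hxy => Subtype.ext (congrArg Units.val hxy)
  have hinf := (Set.infinite_range_of_injective hlam).mono hfix
  obtain ⟨g, hg⟩ := hlim
  simp only at hg
  rwa [← hg, MulAction.stabilizer_smul_eq_stabilizer_map_conj, Subgroup.coe_map,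
    MulEquiv.coe_toMonoidHom, Set.infinite_image_iff (MulEquiv.injective _).injOn] at hinf

end OneParameterSubgroup

section Torus

variable {L : Type*} [Field L]

/-- A three-dimensional torus in `G₄`, containing the one-parameter subgroups that witness
instability. -/
def torus4 (a b t : Lˣ) : Group4 L :=
  (⟨diagonal ![((a⁻¹ : Lˣ) : L), a], by simp [det_diagonal]⟩,
    ⟨diagonal ![((b⁻¹ ^ 2 : Lˣ) : L), b, b], by simp [det_diagonal, Fin.prod_univ_three]; field⟩, t)

/-- The characters by which `torus4` acts on the coordinates. -/
def torusWeight (a b t : Lˣ) : Fin 14 → Lˣ :=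
  ![a⁻¹ * b⁻¹ ^ 4 * t⁻¹, a * b⁻¹ ^ 4 * t⁻¹, a⁻¹ * b ^ 2 * t⁻¹, a * b ^ 2 * t⁻¹,
    a⁻¹ * b ^ 2 * t⁻¹, a * b ^ 2 * t⁻¹, a⁻¹ * b⁻¹ * t⁻¹, a * b⁻¹ * t⁻¹, a⁻¹ * b⁻¹ * t⁻¹,
    a * b⁻¹ * t⁻¹, a⁻¹ * b ^ 2 * t⁻¹, a * b ^ 2 * t⁻¹, a⁻¹ * t ^ 3, a * t ^ 3]

theorem smul_torus4 (c : Fin 14 → L) (a b t : Lˣ) :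
    c <• torus4 a b t = fun i => torusWeight a b t i * c i := by
  have hA : ∀ u, (torus4 a b t).1.1 *ᵥ u = ![((a⁻¹ : Lˣ) : L) * u 0, a * u 1] := by
    intro u
    ext i
    fin_cases i <;> simp [torus4, mulVec_diagonal]
  have hB : ∀ x, (torus4 a b t).2.1.1 *ᵥ x = ![((b⁻¹ ^ 2 : Lˣ) : L) * x 0, b * x 1, b * x 2] := by
    intro x
    ext i
    fin_cases i <;> simp [torus4, mulVec_diagonal]
  have ht : (torus4 a b t).2.2 = t := rfl
  refine pencil_linForm_ext (fun u => ?_) fun u => ?_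
  · ext x
    rw [pencil_smul, hA, ht]
    simp only [_root_.smul_apply, QuadraticMap.comp_apply, mulVecLin_apply, hB, conic_apply,
      conicCoeffs_pencil, Matrix.cons_val, torusWeight, Units.val_mul, Units.val_pow_eq_pow_val,
      Units.smul_def, smul_eq_mul, Units.val_inv_eq_inv_val]
    field_simp
  · rw [linForm_smul, hA, ht]
    simp only [linForm, torusWeight, Matrix.cons_val, Units.val_mul, Units.val_pow_eq_pow_val]
    ring

theorem not_stable4_of_common_root [Infinite L] {c : Fin 14 → L} (h₀ : c 0 = 0) (h₆ : c 6 = 0)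
    (h₈ : c 8 = 0) (h₁₂ : c 12 = 0) : ¬ Stable4 c := by
  rw [stable4_iff_isZariskiClosed_orbit]
  refine fun ⟨hclosed, hfin⟩ => infinite_stabilizer_of_isZariskiClosed_orbit hclosed
    (lam := fun s => .op (torus4 (s ^ 3) s s⁻¹)) (fun s s' hs => ?_)
    (w := ![-6, 0, 0, 6, 0, 6, -3, 3, -3, 3, 0, 6, -6, 0]) (fun s d i => ?_) (fun i => ?_) hfin
  · simpa [torus4] using congr(($hs).unop.2.2)
  · rw [smul_torus4]
    have hs : torusWeight (s ^ 3) s s⁻¹ i =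
        s ^ (![-6, 0, 0, 6, 0, 6, -3, 3, -3, 3, 0, 6, -6, 0] : Fin 14 → ℤ) i := by
      fin_cases i <;> simp [torusWeight] <;> group
    simp only [hs, Units.val_zpow_eq_zpow_val]
  · fin_cases i <;> simp [h₀, h₆, h₈, h₁₂]

theorem not_stable4_of_double_root [Infinite L] {c : Fin 14 → L} (h₀ : c 0 = 0) (h₁ : c 1 = 0)
    (h₆ : c 6 = 0) (h₈ : c 8 = 0) : ¬ Stable4 c := by
  rw [stable4_iff_isZariskiClosed_orbit]
  refine fun ⟨hclosed, hfin⟩ => infinite_stabilizer_of_isZariskiClosed_orbit hclosed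
    (lam := fun s => .op (torus4 (s ^ 3) (s ^ 2) s)) (fun s s' hs => ?_)
    (w := ![-12, -6, 0, 6, 0, 6, -6, 0, -6, 0, 0, 6, 0, 6]) (fun s d i => ?_) (fun i => ?_) hfin
  · simpa [torus4] using congr(($hs).unop.2.2)
  · rw [smul_torus4]
    have hs : torusWeight (s ^ 3) (s ^ 2) s i =
        s ^ (![-12, -6, 0, 6, 0, 6, -6, 0, -6, 0, 0, 6, 0, 6] : Fin 14 → ℤ) i := by
      fin_cases i <;> simp [torusWeight] <;> group
    simp only [hs, Units.val_zpow_eq_zpow_val]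
  · fin_cases i <;> simp [h₀, h₁, h₆, h₈]

end Torus

section Unstable

variable {L : Type*} [Field L]

theorem exists_smul_apply_eq_zero_of_singular {c : Fin 14 → L} {p : Fin 3 → L} (hp : p ≠ 0)
    (hQ : pencil c ![1, 0] p = 0) (hpolar : ∀ x, polar (pencil c ![1, 0]) p x = 0) :
    ∃ g : Group4 L, (c <• g) 0 = 0 ∧ (c <• g) 6 = 0 ∧ (c <• g) 8 = 0 ∧ (c <• g) 12 = c 12 ∧
      (pencil c ![0, 1] p = 0 → (c <• g) 1 = 0) := by
  obtain ⟨B, a, hB⟩ := exists_specialLinear_mulVec_eq_smul (n := Fin 3) (x := ![1, 0, 0])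
    (fun h => one_ne_zero (congr_fun h 0)) hp
  let g : Group4 L := (1, B, 1)
  have hpencil (u : Fin 2 → L) : pencil (c <• g) u = (pencil c u).comp B.1.mulVecLin := by
    simp [g, pencil_smul]
  have hvalue {u : Fin 2 → L} (hu : pencil c u p = 0) : pencil (c <• g) u ![1, 0, 0] = 0 := by
    rw [hpencil, QuadraticMap.comp_apply, mulVecLin_apply, hB, Units.smul_def,
      QuadraticMap.map_smul, hu, smul_zero]
  have hline (x : Fin 3 → L) : polar (pencil (c <• g) ![1, 0]) ![1, 0, 0] x = 0 := by
    rw [hpencil, polar_comp_mulVecLin, hB, Units.smul_def, QuadraticMap.polar_smul_left, hpolar,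
      smul_zero]
  have hcoeff (i : Fin 6) := congr_fun (conicCoeffs_pencil (c <• g) ![1, 0]) i
  refine ⟨g, ?_, ?_, ?_, ?_, fun hQ' => ?_⟩
  · simpa using (hcoeff 0).symm.trans (hvalue hQ)
  · simpa using (hcoeff 3).symm.trans (hline ![0, 1, 0])
  · simpa using (hcoeff 4).symm.trans (hline ![0, 0, 1])
  · simp [g, smul_apply_twelve]
  · simpa using (congr_fun (conicCoeffs_pencil (c <• g) ![0, 1]) 0).symm.trans (hvalue hQ')

theorem exists_smul_pencil_eq (c : Fin 14 → L) {p : Fin 2 → L} (hp : p ≠ 0) :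
    ∃ (g : Group4 L) (a : L), pencil (c <• g) ![1, 0] = a • pencil c p ∧
      linForm (c <• g) ![1, 0] = a * linForm c p ∧
      ∃ w, pencil (c <• g) ![0, 1] = pencil c w := by
  obtain ⟨A, a, hA⟩ := exists_specialLinear_mulVec_eq_smul (n := Fin 2) (x := ![1, 0])
    (fun h => one_ne_zero (congr_fun h 0)) hp
  refine ⟨(A, 1, 1), a, ?_, ?_, A.1 *ᵥ ![0, 1], ?_⟩
  · ext x
    simp [pencil_smul, hA, Units.smul_def, pencil_smul_right]
  · simp [linForm_smul, hA, Units.smul_def, linForm_smul_right]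
  · ext x
    simp [pencil_smul]

variable [IsAlgClosed L]

theorem not_stable4_of_discCubic_discr_eq_zero {c : Fin 14 → L} (h : (discCubic c).discr = 0) :
    ¬ Stable4 c := by
  have := IsAlgClosed.instInfinite (K := L)
  obtain ⟨p, hp, hroot, hdouble⟩ := exists_double_zero_of_discr_eq_zero h
  obtain ⟨g, a, hQ, -, w, hQ'⟩ := exists_smul_pencil_eq c hp
  obtain ⟨x, hx, hQx, hpolar, hQ'x⟩ := exists_singular_point (Q := pencil (c <• g) ![1, 0])
    (Q' := pencil (c <• g) ![0, 1])
    (by rw [hQ, conicDisc_smul, ← binaryCubicEval_discCubic, hroot, mul_zero])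
    (by rw [hQ, hQ', conicDiscPolar_smul_left, ← binaryCubicPolar_discCubic, hdouble, mul_zero])
  obtain ⟨b, h₀, h₆, h₈, -, h₁⟩ := exists_smul_apply_eq_zero_of_singular hx hQx hpolar
  rw [← stable4_smul_iff c g, ← stable4_smul_iff _ b]
  exact not_stable4_of_double_root h₀ (h₁ hQ'x) h₆ h₈

theorem not_stable4_of_linForm_eq_zero {c : Fin 14 → L} {p : Fin 2 → L} (hp : p ≠ 0)
    (hG : linForm c p = 0) (hk : binaryCubicEval (discCubic c) p = 0) : ¬ Stable4 c := by
  have := IsAlgClosed.instInfinite (K := L)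
  obtain ⟨g, a, hQ, hG', -⟩ := exists_smul_pencil_eq c hp
  obtain ⟨x, hx, hQx, hpolar, -⟩ := exists_singular_point (Q := pencil (c <• g) ![1, 0]) (Q' := 0)
    (by rw [hQ, conicDisc_smul, ← binaryCubicEval_discCubic, hk, mul_zero])
    (by simp [conicDiscPolar])
  obtain ⟨b, h₀, h₆, h₈, h₁₂, -⟩ := exists_smul_apply_eq_zero_of_singular hx hQx hpolar
  have hc₁₂ : (c <• g) 12 = 0 := by
    rw [hG, mul_zero] at hG'
    simpa [linForm] using hG'
  rw [← stable4_smul_iff c g, ← stable4_smul_iff _ b]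
  exact not_stable4_of_common_root h₀ h₆ h₈ (h₁₂.trans hc₁₂)

theorem not_stable4_of_Delta4_eq_zero {c : Fin 14 → L} (h : Delta4 c = 0) : ¬ Stable4 c := by
  rw [Delta4_eq_discr_mul, mul_eq_zero, sq_eq_zero_iff] at h
  obtain hdiscr | hres := h
  · exact not_stable4_of_discCubic_discr_eq_zero hdiscr
  by_cases hG : (![c 13, -c 12] : Fin 2 → L) = 0
  · obtain ⟨p, hp, hk⟩ := exists_binaryCubicEval_eq_zero (discCubic c)
    have h₁₂ : c 12 = 0 := neg_eq_zero.mp (congr_fun hG 1)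
    have h₁₃ : c 13 = 0 := congr_fun hG 0
    exact not_stable4_of_linForm_eq_zero hp (by simp [linForm, h₁₂, h₁₃]) hk
  · exact not_stable4_of_linForm_eq_zero hG (by simp [linForm, mul_comm]) hres

end Unstable

section NormalForm

variable {R : Type*} [CommRing R]

/-- The pair `F = U Y (X - Z) + W Z (X - Y)`, `G = m U + n W`. The base points of `F` are
`(1 : 0 : 0)`, `(0 : 1 : 0)`, `(0 : 0 : 1)` and `(1 : 1 : 1)`. -/
def normalForm (m n : R) : Fin 14 → R :=
  ofPencil (linePair ![0, 1, 0] ![1, 0, -1]) (linePair ![0, 0, 1] ![1, -1, 0]) m n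

theorem pencil_normalForm (m n : R) (u : Fin 2 → R) :
    pencil (normalForm m n) u =
      u 0 • linePair ![0, 1, 0] ![1, 0, -1] + u 1 • linePair ![0, 0, 1] ![1, -1, 0] :=
  pencil_ofPencil _ _ _ _ _

theorem eq_normalForm_of_pencil {c : Fin 14 → R}
    (h₀ : pencil c ![1, 0] = linePair ![0, 1, 0] ![1, 0, -1])
    (h₁ : pencil c ![0, 1] = linePair ![0, 0, 1] ![1, -1, 0]) :
    c = normalForm (linForm c ![1, 0]) (linForm c ![0, 1]) := by
  rw [normalForm, ← h₀, ← h₁, ofPencil_pencil]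

theorem pencil_normalForm_apply (m n : R) (u : Fin 2 → R) (x : Fin 3 → R) :
    pencil (normalForm m n) u x = u 0 * (x 1 * (x 0 - x 2)) + u 1 * (x 2 * (x 0 - x 1)) := by
  simp [pencil_normalForm, linePair_apply, dotProduct, Fin.sum_univ_three, sub_eq_add_neg]

theorem linForm_normalForm (m n : R) (u : Fin 2 → R) :
    linForm (normalForm m n) u = u 0 * m + u 1 * n :=
  linForm_ofPencil _ _ _ _ _

theorem row_vecMul_nonsing_inv {n : Type*} [Fintype n] [DecidableEq n] {M : Matrix n n R}
    (hM : IsUnit M.det) (i : n) : M i ᵥ* M⁻¹ = Pi.single i 1 := by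
  rw [← vecMul_one (Pi.single i 1), ← mul_nonsing_inv M hM, ← vecMul_vecMul, single_one_vecMul]
  rfl

theorem triple_product_smul_eq (l₁ l₂ l₃ l₄ : Fin 3 → R) :
    (l₃ ⬝ᵥ l₁ ⨯₃ l₂) • l₄ =
      (l₂ ⬝ᵥ l₃ ⨯₃ l₄) • l₁ - (l₁ ⬝ᵥ l₃ ⨯₃ l₄) • l₂ + (l₄ ⬝ᵥ l₁ ⨯₃ l₂) • l₃ := by
  ext i
  simp only [cross_apply, vec3_dotProduct, Pi.add_apply, Pi.sub_apply, Pi.smul_apply, smul_eq_mul,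
    Matrix.cons_val]
  match i with
  | 0 | 1 | 2 => ring

theorem discCubic_eq_of_pencil_eq_linePair {c : Fin 14 → R} {l₁ l₂ l₃ l₄ : Fin 3 → R}
    (hl : pencil c ![1, 0] = linePair l₁ l₂) (hl' : pencil c ![0, 1] = linePair l₃ l₄) :
    discCubic c = ⟨0, -((l₃ ⬝ᵥ l₁ ⨯₃ l₂) * (l₄ ⬝ᵥ l₁ ⨯₃ l₂)),
      -((l₁ ⬝ᵥ l₃ ⨯₃ l₄) * (l₂ ⬝ᵥ l₃ ⨯₃ l₄)), 0⟩ := by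
  rw [discCubic, hl, hl', conicDisc_linePair, conicDisc_linePair, conicDiscPolar_linePair,
    conicDiscPolar_linePair, linePair_apply, linePair_apply]

theorem triple_product_ne_zero_of_discr_ne_zero [IsDomain R] {c : Fin 14 → R}
    {l₁ l₂ l₃ l₄ : Fin 3 → R}
    (hl : pencil c ![1, 0] = linePair l₁ l₂) (hl' : pencil c ![0, 1] = linePair l₃ l₄)
    (hc : (discCubic c).discr ≠ 0) :
    (l₃ ⬝ᵥ l₁ ⨯₃ l₂ ≠ 0 ∧ l₄ ⬝ᵥ l₁ ⨯₃ l₂ ≠ 0) ∧ l₁ ⬝ᵥ l₃ ⨯₃ l₄ ≠ 0 ∧ l₂ ⬝ᵥ l₃ ⨯₃ l₄ ≠ 0 := by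
  have hdiscr : (discCubic c).discr = (((l₃ ⬝ᵥ l₁ ⨯₃ l₂) * (l₄ ⬝ᵥ l₁ ⨯₃ l₂)) *
      ((l₁ ⬝ᵥ l₃ ⨯₃ l₄) * (l₂ ⬝ᵥ l₃ ⨯₃ l₄))) ^ 2 := by
    rw [discCubic_eq_of_pencil_eq_linePair hl hl', Cubic.discr]
    ring
  rw [hdiscr] at hc
  simpa only [mul_ne_zero_iff] using ne_zero_pow two_ne_zero hc

variable {L : Type*} [Field L]

/-- By Cramer's rule the vectors `mᵢ`, multiples of the `lᵢ`, satisfy `m₄ = m₂ + m₃ - m₁`, the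
relation between the linear forms `Y`, `X - Z`, `Z`, `X - Y`. -/
theorem exists_smul_linePair_comp_eq {l₁ l₂ l₃ l₄ : Fin 3 → L} (h₁₂₃ : l₃ ⬝ᵥ l₁ ⨯₃ l₂ ≠ 0)
    (h₁₂₄ : l₄ ⬝ᵥ l₁ ⨯₃ l₂ ≠ 0) (h₁₃₄ : l₁ ⬝ᵥ l₃ ⨯₃ l₄ ≠ 0) (h₂₃₄ : l₂ ⬝ᵥ l₃ ⨯₃ l₄ ≠ 0) :
    ∃ (N : Matrix (Fin 3) (Fin 3) L) (a b : L), N.det ≠ 0 ∧ a ≠ 0 ∧ b ≠ 0 ∧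
      (a • linePair l₁ l₂).comp N.mulVecLin = linePair ![0, 1, 0] ![1, 0, -1] ∧
      (b • linePair l₃ l₄).comp N.mulVecLin = linePair ![0, 0, 1] ![1, -1, 0] := by
  let m₁ := -(l₂ ⬝ᵥ l₃ ⨯₃ l₄) • l₁
  let m₂ := -(l₁ ⬝ᵥ l₃ ⨯₃ l₄) • l₂
  let m₃ := (l₄ ⬝ᵥ l₁ ⨯₃ l₂) • l₃
  let m₄ := (l₃ ⬝ᵥ l₁ ⨯₃ l₂) • l₄
  have hm₄ : m₄ = m₂ + m₃ - m₁ := by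
    simp only [m₁, m₂, m₃, m₄, triple_product_smul_eq l₁ l₂ l₃ l₄, neg_smul]
    abel
  let M := of ![m₂ + m₃, m₁, m₃]
  have hM : M.det ≠ 0 := by
    have : M.det = -((l₃ ⬝ᵥ l₁ ⨯₃ l₂) * (l₄ ⬝ᵥ l₁ ⨯₃ l₂) * (l₁ ⬝ᵥ l₃ ⨯₃ l₄) *
        (l₂ ⬝ᵥ l₃ ⨯₃ l₄)) := by
      simp only [M, m₁, m₂, m₃, det_fin_three, of_apply, cross_apply, vec3_dotProduct,
        Pi.add_apply, Pi.smul_apply, smul_eq_mul, Matrix.cons_val]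
      ring
    rw [this, neg_ne_zero]
    positivity
  have h₁ : m₁ ᵥ* M⁻¹ = ![0, 1, 0] :=
    (row_vecMul_nonsing_inv hM.isUnit 1).trans (by ext i; fin_cases i <;> rfl)
  have h₃ : m₃ ᵥ* M⁻¹ = ![0, 0, 1] :=
    (row_vecMul_nonsing_inv hM.isUnit 2).trans (by ext i; fin_cases i <;> rfl)
  have h₂₃ : (m₂ + m₃) ᵥ* M⁻¹ = ![1, 0, 0] :=
    (row_vecMul_nonsing_inv hM.isUnit 0).trans (by ext i; fin_cases i <;> rfl)
  have h₂ : m₂ ᵥ* M⁻¹ = ![1, 0, -1] := by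
    rw [eq_sub_of_add_eq (add_vecMul M⁻¹ m₂ m₃).symm, h₂₃, h₃]
    simp
  have h₄ : m₄ ᵥ* M⁻¹ = ![1, -1, 0] := by
    rw [hm₄, sub_vecMul, h₂₃, h₁]
    ext i
    fin_cases i <;> simp
  refine ⟨M⁻¹, -(l₂ ⬝ᵥ l₃ ⨯₃ l₄) * -(l₁ ⬝ᵥ l₃ ⨯₃ l₄), (l₄ ⬝ᵥ l₁ ⨯₃ l₂) * (l₃ ⬝ᵥ l₁ ⨯₃ l₂),
    ?_, by rw [neg_mul_neg]; positivity, by positivity, ?_, ?_⟩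
  · exact (M.isUnit_nonsing_inv_det hM.isUnit).ne_zero
  · rw [← smul_linePair_smul, linePair_comp, h₁, h₂]
  · rw [← smul_linePair_smul, linePair_comp, h₃, h₄]

theorem exists_eq_smul_specialLinear {n K : Type*} [Fintype n] [DecidableEq n] [Nonempty n]
    [Field K] [IsAlgClosed K] {M : Matrix n n K} (hM : M.det ≠ 0) :
    ∃ (a : Kˣ) (A : Matrix.SpecialLinearGroup n K), M = a • A.1 := by
  obtain ⟨a, ha⟩ := IsAlgClosed.exists_pow_nat_eq M.det (n := Fintype.card n) Fintype.card_pos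
  have ha₀ : a ≠ 0 := by
    rintro rfl
    exact hM (by rw [← ha, zero_pow Fintype.card_ne_zero])
  refine ⟨Units.mk0 a ha₀, ⟨a⁻¹ • M, ?_⟩, ?_⟩
  · rw [det_smul, inv_pow, ha, inv_mul_cancel₀ hM]
  · simp [Units.smul_def, smul_smul, ha₀]

variable [IsAlgClosed L]

theorem exists_pencil_smul_eq_comp (c : Fin 14 → L) {M : Matrix (Fin 2) (Fin 2) L}
    {N : Matrix (Fin 3) (Fin 3) L} (hM : M.det ≠ 0) (hN : N.det ≠ 0) :
    ∃ g : Group4 L, ∀ u, pencil (c <• g) u = (pencil c (M *ᵥ u)).comp N.mulVecLin := by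
  obtain ⟨a, A, rfl⟩ := exists_eq_smul_specialLinear hM
  obtain ⟨b, B, rfl⟩ := exists_eq_smul_specialLinear hN
  refine ⟨(A, B, (a * b ^ 2)⁻¹), fun u => ?_⟩
  ext x
  simp only [pencil_smul, QuadraticMap.comp_apply, _root_.smul_apply, mulVecLin_apply, inv_inv,
    Units.smul_def, Units.val_mul, Units.val_pow_eq_pow_val, smul_mulVec, pencil_smul_right,
    QuadraticMap.map_smul, smul_eq_mul]
  ring

theorem exists_pencil_smul_eq_linePair {c : Fin 14 → L} (hc : (discCubic c).discr ≠ 0) :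
    ∃ (g : Group4 L) (l₁ l₂ l₃ l₄ : Fin 3 → L), pencil (c <• g) ![1, 0] = linePair l₁ l₂ ∧
      pencil (c <• g) ![0, 1] = linePair l₃ l₄ := by
  obtain ⟨p, q, hpq, hp, hq⟩ := exists_two_zeros_of_discr_ne_zero hc
  obtain ⟨g, hg⟩ := exists_pencil_smul_eq_comp c (M := (of ![p, q])ᵀ) (N := 1)
    (by rwa [det_transpose]) (by simp)
  simp only [mulVecLin_one] at hg
  have hcol₀ : (of ![p, q])ᵀ *ᵥ ![1, 0] = p := by ext i; simp [mulVec_transpose]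
  have hcol₁ : (of ![p, q])ᵀ *ᵥ ![0, 1] = q := by ext i; simp [mulVec_transpose]
  rw [binaryCubicEval_discCubic] at hp hq
  obtain ⟨l₁, l₂, hl⟩ := exists_eq_linePair_of_conicDisc_eq_zero hp
  obtain ⟨l₃, l₄, hl'⟩ := exists_eq_linePair_of_conicDisc_eq_zero hq
  refine ⟨g, l₁, l₂, l₃, l₄, ?_, ?_⟩
  · rw [hg, hcol₀, hl]
    rfl
  · rw [hg, hcol₁, hl']
    rfl

theorem exists_smul_eq_normalForm {c : Fin 14 → L} (hc : Delta4 c ≠ 0) :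
    ∃ (g : Group4 L) (m n : L), c <• g = normalForm m n := by
  have := IsAlgClosed.instInfinite (K := L)
  have hdiscr (g : Group4 L) : (discCubic (c <• g)).discr ≠ 0 := by
    rw [← Delta4_smul c g, Delta4_eq_discr_mul] at hc
    exact left_ne_zero_of_mul hc
  obtain ⟨g, l₁, l₂, l₃, l₄, hl, hl'⟩ := exists_pencil_smul_eq_linePair (c := c)
    (by simpa using hdiscr 1)
  obtain ⟨⟨h₁₂₃, h₁₂₄⟩, h₁₃₄, h₂₃₄⟩ := triple_product_ne_zero_of_discr_ne_zero hl hl' (hdiscr g)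
  obtain ⟨N, a, b, hN, ha, hb, hNl, hNl'⟩ := exists_smul_linePair_comp_eq h₁₂₃ h₁₂₄ h₁₃₄ h₂₃₄
  obtain ⟨h, hh⟩ := exists_pencil_smul_eq_comp (c <• g) (M := diagonal ![a, b])
    (by simp [det_diagonal, ha, hb]) hN
  have he₀ : diagonal ![a, b] *ᵥ ![1, 0] = a • ![1, 0] := by
    ext i
    fin_cases i <;> simp [mulVec_diagonal]
  have he₁ : diagonal ![a, b] *ᵥ ![0, 1] = b • ![0, 1] := by
    ext i
    fin_cases i <;> simp [mulVec_diagonal]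
  refine ⟨g * h, linForm (c <• g <• h) ![1, 0], linForm (c <• g <• h) ![0, 1], ?_⟩
  rw [MulOpposite.op_mul, mul_smul]
  refine eq_normalForm_of_pencil ?_ ?_
  · rw [hh, he₀, pencil_smul_right, hl, hNl]
  · rw [hh, he₁, pencil_smul_right, hl', hNl']

end NormalForm

section Slice

variable {R : Type*} [CommRing R]

theorem v4QuarticCoeffs_normalForm (m n : R) :
    v4QuarticCoeffs (normalForm m n) = ![0, -m, -(m + n), -n, 0] := by
  have hdisc : discCubic (normalForm m n) = ⟨0, -1, -1, 0⟩ := by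
    rw [discCubic_eq_of_pencil_eq_linePair (c := normalForm m n)
      (l₁ := ![0, 1, 0]) (l₂ := ![1, 0, -1]) (l₃ := ![0, 0, 1]) (l₄ := ![1, -1, 0])
      (by simp [pencil_normalForm]) (by simp [pencil_normalForm])]
    simp [cross_apply]
  have h₁₂ : normalForm m n 12 = m ∧ normalForm m n 13 = n := ⟨rfl, rfl⟩
  rw [v4QuarticCoeffs_eq_linearMulCubic, hdisc, h₁₂.1, h₁₂.2]
  simp only [linearMulCubic]
  congrm ![?_, ?_, ?_, ?_, ?_] <;> ring

theorem quarticI_normalForm (m n : R) :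
    quarticI (v4QuarticCoeffs (normalForm m n)) = m ^ 2 - m * n + n ^ 2 := by
  simp only [v4QuarticCoeffs_normalForm, quarticI, Matrix.cons_val]
  ring

theorem quarticJ_normalForm (m n : R) :
    quarticJ (v4QuarticCoeffs (normalForm m n)) = -((m + n) * (2 * m - n) * (m - 2 * n)) := by
  simp only [v4QuarticCoeffs_normalForm, quarticJ, Matrix.cons_val]
  ring

theorem Delta4_normalForm (m n : R) : Delta4 (normalForm m n) = (m * n * (m - n)) ^ 2 := by
  simp only [Delta4, v4QuarticCoeffs_normalForm, disc4, Matrix.cons_val]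
  ring

variable {L : Type*} [Field L]

theorem normalForm_mem_orbit_rotate (m n : L) :
    normalForm (n - m) (-m) ∈ MulAction.orbit (Group4 L)ᵐᵒᵖ (normalForm m n) := by
  let g : Group4 L := (⟨!![-1, -1; 1, 0], by simp [det_fin_two]⟩,
    ⟨!![0, 1, 0; 0, 0, 1; 1, 0, 0], by simp [det_fin_three]⟩, 1)
  refine ⟨MulOpposite.op g, pencil_linForm_ext (fun u => ?_) fun u => ?_⟩
  · ext x
    simp only [g, pencil_smul, pencil_normalForm_apply, QuadraticMap.comp_apply,
      mulVecLin_apply, mulVec, dotProduct, Fin.sum_univ_two, Fin.sum_univ_three, of_apply,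
      Matrix.cons_val, inv_one, one_smul]
    ring
  · simp only [g, linForm_smul, linForm_normalForm, mulVec, dotProduct, Fin.sum_univ_two, of_apply,
      Matrix.cons_val, Units.val_one]
    ring

theorem normalForm_mem_orbit_swap [IsAlgClosed L] (m n : L) :
    normalForm n m ∈ MulAction.orbit (Group4 L)ᵐᵒᵖ (normalForm m n) := by
  obtain ⟨ζ, hζ⟩ := IsAlgClosed.exists_pow_nat_eq (-1 : L) two_pos
  have hζ₀ : ζ ≠ 0 := by
    rintro rfl
    simp at hζ
  let g : Group4 L := (⟨!![0, ζ; ζ, 0], by rw [det_fin_two_of]; linear_combination -hζ⟩,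
    ⟨!![-1, 0, 0; 0, 0, -1; 0, -1, 0], by simp [det_fin_three]⟩, Units.mk0 ζ hζ₀)
  refine ⟨MulOpposite.op g, pencil_linForm_ext (fun u => ?_) fun u => ?_⟩
  · ext x
    simp only [g, pencil_smul, pencil_normalForm_apply, _root_.smul_apply, Units.smul_def,
      smul_eq_mul, QuadraticMap.comp_apply, mulVecLin_apply, mulVec, dotProduct, Fin.sum_univ_two,
      Fin.sum_univ_three, of_apply, Matrix.cons_val, Units.val_inv_eq_inv_val, Units.val_mk0]
    field_simp
    ring
  · simp only [g, linForm_smul, linForm_normalForm, mulVec, dotProduct, Fin.sum_univ_two, of_apply,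
      Matrix.cons_val, Units.val_mk0]
    linear_combination (m * u 1 + n * u 0) * (ζ ^ 2 - 1) * hζ

theorem normalForm_mem_orbit_rotate_rotate (m n : L) :
    normalForm (-n) (m - n) ∈ MulAction.orbit (Group4 L)ᵐᵒᵖ (normalForm m n) := by
  rw [← MulAction.orbit_eq_iff.2 (normalForm_mem_orbit_rotate m n)]
  convert normalForm_mem_orbit_rotate (n - m) (-m) using 2 <;> ring

theorem normalForm_mem_orbit_neg_swap [IsAlgClosed L] {m n : L}
    (h : 2 * ((m + n) * (2 * m - n) * (m - 2 * n)) = 0) :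
    normalForm (-n) (-m) ∈ MulAction.orbit (Group4 L)ᵐᵒᵖ (normalForm m n) := by
  simp only [mul_eq_zero] at h
  rcases h with h | (h | h) | h
  · convert normalForm_mem_orbit_swap m n using 2
    · linear_combination -n * h
    · linear_combination -m * h
  · convert MulAction.mem_orbit_self (normalForm m n) using 2
    · linear_combination -h
    · linear_combination -h
  · convert normalForm_mem_orbit_rotate_rotate m n using 2
    linear_combination -h
  · convert normalForm_mem_orbit_rotate m n using 2
    linear_combination h

theorem eq_perm_of_symmetric {R : Type*} [CommRing R] [IsDomain R] {x y z x' y' z' : R}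
    (h₁ : x' + y' + z' = x + y + z)
    (h₂ : x' * y' + y' * z' + z' * x' = x * y + y * z + z * x) (h₃ : x' * y' * z' = x * y * z) :
    (x' = x ∧ y' = y) ∨ (x' = y ∧ y' = z) ∨ (x' = z ∧ y' = x) ∨ (x' = y ∧ y' = x) ∨
      (x' = x ∧ y' = z) ∨ (x' = z ∧ y' = y) := by
  have root : (x' - x) * ((x' - y) * (x' - z)) = 0 := by
    linear_combination x' ^ 2 * h₁ - x' * h₂ + h₃
  have quad : (y' - x) * (y' - (y + z - x')) + (x' - y) * (x' - z) = 0 := by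
    linear_combination -h₂ + (x' + y') * h₁
  simp only [mul_eq_zero, sub_eq_zero] at root
  rcases root with rfl | rfl | rfl
  · have : (y' - y) * (y' - z) = 0 := by linear_combination quad
    simp only [mul_eq_zero, sub_eq_zero] at this
    tauto
  · have : (y' - x) * (y' - z) = 0 := by linear_combination quad
    simp only [mul_eq_zero, sub_eq_zero] at this
    tauto
  · have : (y' - x) * (y' - y) = 0 := by linear_combination quad
    simp only [mul_eq_zero, sub_eq_zero] at this
    tauto

/-- By `hI` and `hΔ` the triples `(n', -m', m' - n')` and `(n, -m, m - n)` agree up to a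
permutation; the even ones are the rotations, and under an odd one `J` changes sign. -/
theorem normalForm_mem_orbit_of_mul_mul_eq [IsAlgClosed L] {m n m' n' : L}
    (hI : m' ^ 2 - m' * n' + n' ^ 2 = m ^ 2 - m * n + n ^ 2)
    (hJ : (m' + n') * (2 * m' - n') * (m' - 2 * n') = (m + n) * (2 * m - n) * (m - 2 * n))
    (hΔ : m' * n' * (m' - n') = m * n * (m - n)) :
    normalForm m' n' ∈ MulAction.orbit (Group4 L)ᵐᵒᵖ (normalForm m n) := by
  have hperm := eq_perm_of_symmetric (x := n) (y := -m) (z := m - n) (x' := n') (y' := -m')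
    (z' := m' - n') (by ring) (by linear_combination -hI) (by linear_combination -hΔ)
  simp only [neg_eq_iff_eq_neg, neg_neg, neg_sub] at hperm
  have hr := MulAction.orbit_eq_iff.2 (normalForm_mem_orbit_rotate m n)
  have hr' := MulAction.orbit_eq_iff.2 (normalForm_mem_orbit_rotate_rotate m n)
  rcases hperm with ⟨rfl, rfl⟩ | ⟨rfl, rfl⟩ | ⟨rfl, rfl⟩ | ⟨rfl, rfl⟩ | ⟨rfl, rfl⟩ | ⟨rfl, rfl⟩
  · exact MulAction.mem_orbit_self _
  · exact normalForm_mem_orbit_rotate m n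
  · exact normalForm_mem_orbit_rotate_rotate m n
  · exact normalForm_mem_orbit_neg_swap (by linear_combination -hJ)
  · rw [← hr']
    convert normalForm_mem_orbit_neg_swap (m := -n') (n := m - n') (by linear_combination -hJ)
      using 2 <;> ring
  · rw [← hr]
    convert normalForm_mem_orbit_neg_swap (m := n - m') (n := -m') (by linear_combination -hJ)
      using 2 <;> ring

theorem normalForm_mem_orbit_of_invariants [IsAlgClosed L] {m n m' n' : L}
    (hI : m' ^ 2 - m' * n' + n' ^ 2 = m ^ 2 - m * n + n ^ 2)
    (hJ : (m' + n') * (2 * m' - n') * (m' - 2 * n') = (m + n) * (2 * m - n) * (m - 2 * n))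
    (hΔ : (m' * n' * (m' - n')) ^ 2 = (m * n * (m - n)) ^ 2) :
    normalForm m' n' ∈ MulAction.orbit (Group4 L)ᵐᵒᵖ (normalForm m n) := by
  rcases sq_eq_sq_iff_eq_or_eq_neg.1 hΔ with hΔ | hΔ
  · exact normalForm_mem_orbit_of_mul_mul_eq hI hJ hΔ
  · rw [← MulAction.orbit_eq_iff.2 (normalForm_mem_orbit_swap m n)]
    exact normalForm_mem_orbit_of_mul_mul_eq (by linear_combination hI)
      (by linear_combination hJ) (by linear_combination hΔ)

end Slice

section Stabilizer

theorem mem_center_iff_exists_smul_eq_smul {n R : Type*} [Fintype n] [DecidableEq n]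
    [CommRing R] {A : Matrix.SpecialLinearGroup n R} :
    A ∈ Subgroup.center (Matrix.SpecialLinearGroup n R) ↔ ∃ r : R, ∀ x : n → R, A • x = r • x := by
  have hscalar (r : R) (x : n → R) : scalar n r *ᵥ x = r • x := by
    rw [scalar_apply, ← smul_one_eq_diagonal, smul_mulVec, one_mulVec]
  rw [Matrix.SpecialLinearGroup.mem_center_iff]
  constructor
  · rintro ⟨r, -, hr⟩
    exact ⟨r, fun x => by rw [← hscalar, hr]; rfl⟩
  · rintro ⟨r, hr⟩
    have hA : scalar n r = A.1 := mulVec_injective (funext fun x => (hscalar r x).trans (hr x).symm)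
    refine ⟨r, ?_, hA⟩
    rw [← A.2, ← hA, scalar_apply, det_diagonal, Finset.prod_const, Finset.card_univ]

variable (L : Type*) [Field L]

/-- Representatives of the four base points of `normalForm m n`. -/
def basePoint : Fin 4 → Fin 3 → L :=
  ![![1, 0, 0], ![0, 1, 0], ![0, 0, 1], ![1, 1, 1]]

variable {L}

theorem basePoint_ne_zero (i : Fin 4) : basePoint L i ≠ 0 := by
  fin_cases i <;> simp [basePoint]

theorem pencil_normalForm_basePoint (m n : L) (u : Fin 2 → L) (i : Fin 4) :
    pencil (normalForm m n) u (basePoint L i) = 0 := by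
  fin_cases i <;> simp [pencil_normalForm_apply, basePoint]

theorem exists_eq_smul_basePoint {m n : L} {x : Fin 3 → L}
    (hx : ∀ u, pencil (normalForm m n) u x = 0) : ∃ (i : Fin 4) (a : L), x = a • basePoint L i := by
  have h₀ := hx ![1, 0]
  have h₁ := hx ![0, 1]
  simp only [pencil_normalForm_apply, Matrix.cons_val, one_mul, zero_mul, add_zero, zero_add,
    mul_eq_zero, sub_eq_zero] at h₀ h₁
  have hx₀ : x = ![x 0, x 1, x 2] := by ext i; fin_cases i <;> rfl
  have key : (x 1 = 0 ∧ x 2 = 0) ∨ (x 0 = 0 ∧ x 2 = 0) ∨ (x 0 = 0 ∧ x 1 = 0) ∨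
      (x 1 = x 0 ∧ x 2 = x 0) := by grind
  rw [hx₀]
  rcases key with ⟨h, h'⟩ | ⟨h, h'⟩ | ⟨h, h'⟩ | ⟨h, h'⟩ <;> rw [h, h']
  · exact ⟨0, x 0, by simp [basePoint]⟩
  · exact ⟨1, x 1, by simp [basePoint]⟩
  · exact ⟨2, x 2, by simp [basePoint]⟩
  · exact ⟨3, x 0, by simp [basePoint]⟩

theorem mem_center_of_smul_basePoint {B : Matrix.SpecialLinearGroup (Fin 3) L}
    (hB : ∀ i, ∃ a : L, B • basePoint L i = a • basePoint L i) :
    B ∈ Subgroup.center (Matrix.SpecialLinearGroup (Fin 3) L) := by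
  choose a ha using hB
  have hsum : basePoint L 3 = basePoint L 0 + basePoint L 1 + basePoint L 2 := by
    simp [basePoint]
  have h₃ := ha 3
  rw [hsum, smul_add, smul_add, ha, ha, ha] at h₃
  have h₀ : a 0 = a 3 := by simpa [basePoint] using congrFun h₃ 0
  have h₁ : a 1 = a 3 := by simpa [basePoint] using congrFun h₃ 1
  have h₂ : a 2 = a 3 := by simpa [basePoint] using congrFun h₃ 2
  refine mem_center_iff_exists_smul_eq_smul.2 ⟨a 3, fun x => ?_⟩
  have hx : x = x 0 • basePoint L 0 + x 1 • basePoint L 1 + x 2 • basePoint L 2 := by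
    ext i
    fin_cases i <;> simp [basePoint]
  rw [hx, smul_add, smul_add, smul_comm B, smul_comm B, smul_comm B, ha, ha, ha, h₀, h₁, h₂]
  module

variable {m n : L} {g : Group4 L}

theorem pencil_normalForm_smul (hg : normalForm m n <• g = normalForm m n)
    (u : Fin 2 → L) (x : Fin 3 → L) :
    pencil (normalForm m n) (g.1 • u) (g.2.1 • x) = g.2.2 * pencil (normalForm m n) u x := by
  have h := congrArg (fun c => pencil c u x) hg
  simp only [pencil_smul, _root_.smul_apply, inv_smul_eq_iff] at h
  exact h

theorem exists_smul_basePoint_eq_smul (hg : normalForm m n <• g = normalForm m n) :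
    ∃ f : Fin 4 → Fin 4, ∀ i, ∃ a : L, g.2.1 • basePoint L i = a • basePoint L (f i) := by
  suffices ∀ i, ∃ (j : Fin 4) (a : L), g.2.1 • basePoint L i = a • basePoint L j by
    choose f a hf using this
    exact ⟨f, fun i => ⟨a i, hf i⟩⟩
  refine fun i => exists_eq_smul_basePoint (m := m) (n := n) fun u => ?_
  rw [← smul_inv_smul g.1 u, pencil_normalForm_smul hg, pencil_normalForm_basePoint, mul_zero]

theorem mem_center_of_normalForm_smul_eq (hg : normalForm m n <• g = normalForm m n)
    (hB : g.2.1 ∈ Subgroup.center (Matrix.SpecialLinearGroup (Fin 3) L)) :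
    g.1 ∈ Subgroup.center (Matrix.SpecialLinearGroup (Fin 2) L) := by
  obtain ⟨r, hr⟩ := mem_center_iff_exists_smul_eq_smul.1 hB
  have hr₀ : r ≠ 0 := by
    rintro rfl
    exact basePoint_ne_zero 0 ((smul_eq_zero_iff_eq g.2.1).1 ((hr _).trans (zero_smul _ _)))
  have key (u : Fin 2 → L) (x : Fin 3 → L) : pencil (normalForm m n) (g.1 • u) x =
      g.2.2 / r ^ 2 * pencil (normalForm m n) u x := by
    rw [div_mul_eq_mul_div, ← pencil_normalForm_smul hg, hr, QuadraticMap.map_smul, smul_eq_mul]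
    field_simp
  refine mem_center_iff_exists_smul_eq_smul.2 ⟨g.2.2 / r ^ 2, fun u => ?_⟩
  have h₀ := key u ![1, 1, 0]
  have h₁ := key u ![1, 0, 1]
  simp only [pencil_normalForm_apply, Matrix.cons_val, sub_zero, sub_self, mul_one, mul_zero,
    add_zero, zero_add] at h₀ h₁
  ext i
  fin_cases i
  exacts [h₀, h₁]

theorem injOn_normalForm_smul_eq (m n : L) :
    Set.InjOn (fun g : Group4 L => (g.1, g.2.1))
      {g | normalForm m n <• g = normalForm m n} := by
  intro g hg h hh hgh
  obtain ⟨hA, hB⟩ := Prod.mk.inj hgh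
  have hvalue : pencil (normalForm m n) ![1, 0] ![1, 1, 0] = 1 := by
    simp [pencil_normalForm_apply]
  have ht : (g.2.2 : L) = h.2.2 := by
    rw [← mul_one (g.2.2 : L), ← mul_one (h.2.2 : L), ← hvalue, ← pencil_normalForm_smul hg,
      ← pencil_normalForm_smul hh, hA, hB]
  exact Prod.ext hA (Prod.ext hB (Units.ext ht))

theorem finite_normalForm_smul_eq_and_mem_center (m n : L) :
    {g : Group4 L | normalForm m n <• g = normalForm m n ∧
      g.2.1 ∈ Subgroup.center (Matrix.SpecialLinearGroup (Fin 3) L)}.Finite := by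
  have hcenter (d : ℕ) [NeZero d] :
      Finite (Subgroup.center (Matrix.SpecialLinearGroup (Fin d) L)) :=
    .of_equiv _ (Matrix.SpecialLinearGroup.center_equiv_rootsOfUnity' 0).symm.toEquiv
  refine Set.Finite.of_finite_image (Set.Finite.subset
    ((Set.toFinite (Subgroup.center (Matrix.SpecialLinearGroup (Fin 2) L) : Set _)).prod
      (Set.toFinite (Subgroup.center (Matrix.SpecialLinearGroup (Fin 3) L) : Set _))) ?_)
    ((injOn_normalForm_smul_eq m n).mono fun g hg => hg.1)
  rintro _ ⟨g, ⟨hg, hB⟩, rfl⟩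
  exact ⟨mem_center_of_normalForm_smul_eq hg hB, hB⟩

/-- Two elements of the stabilizer inducing the same permutation of the base points differ by an
element with central `SL₃`-component. -/
theorem finite_stabilizer_normalForm (m n : L) :
    (MulAction.stabilizer (Group4 L)ᵐᵒᵖ (normalForm m n) : Set (Group4 L)ᵐᵒᵖ).Finite := by
  let S (f : Fin 4 → Fin 4) : Set (Group4 L)ᵐᵒᵖ :=
    {g | g ∈ MulAction.stabilizer (Group4 L)ᵐᵒᵖ (normalForm m n) ∧
      ∀ i, ∃ a : L, g.unop.2.1 • basePoint L i = a • basePoint L (f i)}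
  suffices hS : ∀ f, (S f).Finite by
    refine (Set.finite_iUnion hS).subset fun g hg => Set.mem_iUnion.2 ?_
    obtain ⟨f, hf⟩ := exists_smul_basePoint_eq_smul (g := g.unop) hg
    exact ⟨f, hg, hf⟩
  intro f
  obtain hS | ⟨g₀, hg₀, hf₀⟩ := (S f).eq_empty_or_nonempty
  · rw [hS]
    exact Set.finite_empty
  refine ((((finite_normalForm_smul_eq_and_mem_center m n).preimage
    MulOpposite.unop_injective.injOn)).image (· * g₀)).subset ?_
  rintro g ⟨hg, hf⟩
  refine ⟨g * g₀⁻¹, ⟨mul_mem hg (inv_mem hg₀), mem_center_of_smul_basePoint fun i => ?_⟩,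
    inv_mul_cancel_right g g₀⟩
  obtain ⟨a, ha⟩ := hf i
  obtain ⟨b, hb⟩ := hf₀ i
  have hb₀ : b ≠ 0 := by
    rintro rfl
    exact basePoint_ne_zero i ((smul_eq_zero_iff_eq _).1 (hb.trans (zero_smul _ _)))
  refine ⟨a / b, ?_⟩
  change (g₀.unop.2.1⁻¹ * g.unop.2.1) • basePoint L i = _
  rw [mul_smul, ha, inv_smul_eq_iff, smul_comm g₀.unop.2.1, hb, smul_smul, div_mul_cancel₀ a hb₀]

end Stabilizer

section ClosedOrbit

section Map

variable {R S : Type*} [CommRing R] [CommRing S] (φ : R →+* S)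

theorem map_quarticI (q : Fin 5 → R) : φ (quarticI q) = quarticI (φ ∘ q) := by
  simp [quarticI, map_ofNat]

theorem map_quarticJ (q : Fin 5 → R) : φ (quarticJ q) = quarticJ (φ ∘ q) := by
  simp [quarticJ, map_ofNat]

theorem map_v4QuarticCoeffs (c : Fin 14 → R) :
    φ ∘ v4QuarticCoeffs c = v4QuarticCoeffs (φ ∘ c) := by
  ext i
  fin_cases i <;> simp [v4QuarticCoeffs, map_ofNat]

theorem map_Delta4 (c : Fin 14 → R) : φ (Delta4 c) = Delta4 (φ ∘ c) := by
  simp [Delta4, disc4, ← map_v4QuarticCoeffs, map_ofNat]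

end Map

variable {L : Type*} [Field L] [IsAlgClosed L]

theorem mem_orbit_iff_invariants {c c' : Fin 14 → L} (hc : Delta4 c ≠ 0) :
    c' ∈ MulAction.orbit (Group4 L)ᵐᵒᵖ c ↔
      quarticI (v4QuarticCoeffs c') = quarticI (v4QuarticCoeffs c) ∧
      quarticJ (v4QuarticCoeffs c') = quarticJ (v4QuarticCoeffs c) ∧ Delta4 c' = Delta4 c := by
  have : Infinite L := IsAlgClosed.instInfinite
  have hinv (c : Fin 14 → L) (g : Group4 L) :
      quarticI (v4QuarticCoeffs (c <• g)) = quarticI (v4QuarticCoeffs c) ∧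
      quarticJ (v4QuarticCoeffs (c <• g)) = quarticJ (v4QuarticCoeffs c) ∧
      Delta4 (c <• g) = Delta4 c := by
    rw [v4QuarticCoeffs_smul, quarticI_comp, quarticJ_comp, Delta4_smul, g.1.2]
    simp
  constructor
  · rintro ⟨g, rfl⟩
    exact hinv c g.unop
  · rintro ⟨hI, hJ, hΔ⟩
    obtain ⟨g, m, n, hg⟩ := exists_smul_eq_normalForm hc
    obtain ⟨g', m', n', hg'⟩ := exists_smul_eq_normalForm (hΔ ▸ hc)
    rw [← (hinv c g).1, ← (hinv c' g').1, hg, hg', quarticI_normalForm, quarticI_normalForm] at hI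
    rw [← (hinv c g).2.1, ← (hinv c' g').2.1, hg, hg', quarticJ_normalForm, quarticJ_normalForm,
      neg_inj] at hJ
    rw [← (hinv c g).2.2, ← (hinv c' g').2.2, hg, hg', Delta4_normalForm, Delta4_normalForm] at hΔ
    have h := normalForm_mem_orbit_of_invariants hI hJ hΔ
    rwa [← hg, ← hg', ← MulAction.orbit_eq_iff, MulAction.orbit_smul, MulAction.orbit_smul,
      MulAction.orbit_eq_iff] at h

theorem isZariskiClosed_orbit {c : Fin 14 → L} (hc : Delta4 c ≠ 0) :
    IsZariskiClosed (MulAction.orbit (Group4 L)ᵐᵒᵖ c) := by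
  let q : Fin 5 → MvPolynomial (Fin 14) L := v4QuarticCoeffs MvPolynomial.X
  refine ⟨{quarticI q - .C (quarticI (v4QuarticCoeffs c)),
    quarticJ q - .C (quarticJ (v4QuarticCoeffs c)), Delta4 MvPolynomial.X - .C (Delta4 c)}, ?_⟩
  ext c'
  have hX : MvPolynomial.eval c' ∘ MvPolynomial.X = c' := funext fun _ => MvPolynomial.eval_X _
  simp only [mem_orbit_iff_invariants hc, Set.mem_ofPred_eq, Set.mem_insert_iff,
    Set.mem_singleton_iff, forall_eq_or_imp, forall_eq, map_sub, MvPolynomial.eval_C, sub_eq_zero]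
  simp only [map_quarticI, map_quarticJ, map_Delta4, q, map_v4QuarticCoeffs, hX]

theorem stable4_of_Delta4_ne_zero {c : Fin 14 → L} (hc : Delta4 c ≠ 0) : Stable4 c := by
  have : Infinite L := IsAlgClosed.instInfinite
  obtain ⟨g, m, n, hg⟩ := exists_smul_eq_normalForm hc
  rw [← stable4_smul_iff c g, hg, stable4_iff_isZariskiClosed_orbit]
  refine ⟨isZariskiClosed_orbit ?_, finite_stabilizer_normalForm m n⟩
  rwa [← hg, Delta4_smul]

end ClosedOrbit

/-
STATEMENT 7 (Theorem 4.2): a vector v = (F,G) ∈ V₄ is stable for the action of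
G₄ = SL₂(L) × SL₃(L) × Lˣ if and only if Δ₄(v) ≠ 0.
-/
theorem stable4_iff_Delta4_ne_zero
    {L : Type*} [Field L] [IsAlgClosed L] (c : Fin 14 → L) :
    Stable4 c ↔ Delta4 c ≠ 0 :=
  ⟨fun h hΔ => not_stable4_of_Delta4_eq_zero hΔ h, stable4_of_Delta4_ne_zero⟩
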